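/- Let C be a smooth addable class of finite simple graphs with C_n nonempty for every n ≥ 1. Then the probability that the uniformly random graph R_n(C) is not connected converges to some limit c with c ≤ 1 − e^{−1/2}, and for every sentence φ of first-order logic in the language of graphs, the probability that R_n(C) satisfies φ converges to a value p such that either p ≤ c or p ≥ 1 − c. -/

import Mathlib

open Filter Topology FirstOrder

/-- A class of finite simple graphs, given as a property of simple graphs
on arbitrary finite vertex types. -/
abbrev GraphClassOn := ∀ (V : Type) [Finite V], SimpleGraph V → Prop

/-- The class is invariant under graph isomorphism. -/
def ClassIsoInvariant (C : GraphClassOn) : Prop :=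
  ∀ (V W : Type) [Finite V] [Finite W] (G : SimpleGraph V) (H : SimpleGraph W),
    Nonempty (G ≃g H) → (C V G ↔ C W H)

/-- The class is bridge-addable: one may add an edge between two vertices lying in
distinct connected components. -/
def ClassBridgeAddable (C : GraphClassOn) : Prop :=
  ∀ (V : Type) [Finite V] (G : SimpleGraph V) (u v : V),
    C V G → ¬G.Reachable u v → C V (G ⊔ SimpleGraph.fromEdgeSet {s(u, v)})

/-- The class is decomposable: a graph belongs to the class iff each of its connected
components does. -/
def ClassDecomposable (C : GraphClassOn) : Prop :=
  ∀ (V : Type) [Finite V] (G : SimpleGraph V),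
    C V G ↔ ∀ c : G.ConnectedComponent, C c.supp (G.induce c.supp)

/-- Addable = decomposable and bridge-addable. -/
def ClassAddable (C : GraphClassOn) : Prop :=
  ClassDecomposable C ∧ ClassBridgeAddable C

/-- The number of graphs in the class on the vertex set `Fin n`. -/
noncomputable def classCount (C : GraphClassOn) (n : ℕ) : ℕ :=
  Nat.card {G : SimpleGraph (Fin n) // C (Fin n) G}

/-- The class is small: `c_n ≤ d^n · n!` for some real `d`. -/
def ClassSmall (C : GraphClassOn) : Prop :=
  ∃ d : ℝ, ∀ n : ℕ, (classCount C n : ℝ) ≤ d ^ n * n.factorial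

/-- The class is smooth: `c_n / (n · c_{n-1})` tends to a finite limit. -/
def ClassSmooth (C : GraphClassOn) : Prop :=
  ∃ γ : ℝ, Tendsto (fun n : ℕ => (classCount C n : ℝ) / (n * classCount C (n - 1)))
    atTop (𝓝 γ)

/-- The probability that a uniformly random graph from the class on `Fin n`
satisfies the property `P`. -/
noncomputable def classProb (C : GraphClassOn) (n : ℕ) (P : SimpleGraph (Fin n) → Prop) : ℝ :=
  (Nat.card {G : SimpleGraph (Fin n) // C (Fin n) G ∧ P G} : ℝ) / (classCount C n : ℝ)

/-- The probability that a uniformly random *connected* graph from the class on `Fin n`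
satisfies the property `P`. -/
noncomputable def connClassProb (C : GraphClassOn) (n : ℕ)
    (P : SimpleGraph (Fin n) → Prop) : ℝ :=
  (Nat.card {G : SimpleGraph (Fin n) // (C (Fin n) G ∧ G.Connected) ∧ P G} : ℝ) /
    (Nat.card {G : SimpleGraph (Fin n) // C (Fin n) G ∧ G.Connected} : ℝ)

/-- Satisfaction of a first-order sentence in the language of graphs in a simple graph. -/
def SatFO {V : Type} (G : SimpleGraph V) (φ : Language.graph.Sentence) : Prop :=
  letI := G.structure
  V ⊨ φ

/-- The rooted graph `(H, r)` appears in `G` on the vertex set `W`: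
the induced subgraph of `G` on `W` is isomorphic to `H` via an isomorphism sending some
`w ∈ W` to `r`, every edge of `G` joining `W` to its complement is incident on `w`,
and there is exactly one such edge. -/
def AppearsAt {VH V : Type} (H : SimpleGraph VH) (r : VH) (G : SimpleGraph V)
    (W : Set V) : Prop :=
  ∃ (w : V) (hw : w ∈ W) (e : G.induce W ≃g H),
    e ⟨w, hw⟩ = r ∧
    (∀ a ∈ W, ∀ b ∉ W, G.Adj a b → a = w) ∧
    (∃! b, b ∉ W ∧ G.Adj w b)

/-- The rooted graph `(H, r)` appears in `G`. -/
def Appears {VH V : Type} (H : SimpleGraph VH) (r : VH) (G : SimpleGraph V) : Prop :=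
  ∃ W : Set V, AppearsAt H r G W

/-- The number of appearances of the rooted graph `(H, r)` in `G`, i.e. the number of
vertex sets `W` witnessing an appearance. -/
noncomputable def numAppearances {VH V : Type} (H : SimpleGraph VH) (r : VH)
    (G : SimpleGraph V) : ℕ :=
  Nat.card {W : Set V // AppearsAt H r G W}

/-- The number of connected components of `G` whose induced subgraph is isomorphic
to `H`. -/
noncomputable def numComponentsIso {V VH : Type} (G : SimpleGraph V)
    (H : SimpleGraph VH) : ℕ :=
  Nat.card {c : G.ConnectedComponent // Nonempty (G.induce c.supp ≃g H)}

/-!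
Write `a n = c_n / n!`, and `k n` for its analogue for the connected graphs of the class, with
generating functions `A` and `K`. Marking a vertex and splitting off its component gives
`A' = K' * A`, so `A = exp K`. Joining two connected graphs by a bridge gives each connected graph
on `n` vertices at most `2 * (n - 1)` times, one for each oriented bridge, so that
`(x K')² ≤ 2 x K' - 2 K` coefficientwise. Hence `K ≤ 1 / 2` inside the disc of convergence, and
`A(γ⁻¹) ≤ e^{1/2}`, where `γ = lim a (n + 1) / a n`.

By bridge-addability the number of vertices outside the largest component is bounded in
probability. Summing over this number `h`, the probabilities `x n = k n / a n` of being connected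
satisfy the asymptotic renewal equation `∑ h, a h * γ⁻¹ ^ h * x (n - h) → 1`. As `A(γ⁻¹) < 2`, it
can be inverted by contraction, and `x n → 1 / A(γ⁻¹) ≥ e^{-1/2}`.

A sentence `φ` of quantifier rank `q` cannot distinguish two connected graphs of the class which
contain a pendant copy of a suitable rooted graph `(M, r)`: far away from its root, `M` contains
many copies of every `q`-local type that occurs in the class, so Duplicator wins the
Ehrenfeucht–Fraïssé game. The same holds beside any fixed fragment. Asymptotically almost no
connected graph avoids pendant copies of `(M, r)`, so the contribution of each fragment size to the
probability of `φ` converges. Moreover `φ` is asymptotically almost surely true, or almost surely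
false, among the connected graphs, and its limiting probability is therefore at least `lim x n`, or
at most `1 - lim x n`.
-/

/-! ### Ehrenfeucht–Fraïssé games -/

section EhrenfeuchtFraisse

variable {V W : Type*} {G : SimpleGraph V} {H : SimpleGraph W} {k : ℕ} {P : SetRel V W}

/-- A set of pairs of vertices, read as a partial map, is a partial isomorphism from `G` to `H`. -/
def IsPartialIso (G : SimpleGraph V) (H : SimpleGraph W) (P : SetRel V W) : Prop :=
  ∀ p ∈ P, ∀ q ∈ P, (p.1 = q.1 ↔ p.2 = q.2) ∧ (G.Adj p.1 q.1 ↔ H.Adj p.2 q.2)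

/-- Duplicator wins the `k`-round Ehrenfeucht–Fraïssé game on `G` and `H` in which the pairs
of `P` have already been played. The position `P` may be infinite. -/
def DuplicatorWins (G : SimpleGraph V) (H : SimpleGraph W) : ℕ → SetRel V W → Prop
  | 0, P => IsPartialIso G H P
  | k + 1, P => IsPartialIso G H P ∧ (∀ v, ∃ w, DuplicatorWins G H k (insert (v, w) P)) ∧
      (∀ w, ∃ v, DuplicatorWins G H k (insert (v, w) P))

theorem DuplicatorWins.isPartialIso (h : DuplicatorWins G H k P) : IsPartialIso G H P := by
  cases k with
  | zero => exact h
  | succ k => exact h.1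

/-- The quantifier rank of a first-order formula, the nesting depth of its quantifiers. -/
def quantifierRank {L : Language} {α : Type*} : {n : ℕ} → L.BoundedFormula α n → ℕ
  | _, .falsum => 0
  | _, .equal _ _ => 0
  | _, .rel _ _ => 0
  | _, .imp φ ψ => max (quantifierRank φ) (quantifierRank ψ)
  | _, .all φ => quantifierRank φ + 1

theorem graph_term_eq_var {α : Type*} (t : Language.graph.Term α) : ∃ a, t = .var a := by
  cases t with
  | var a => exact ⟨a, rfl⟩
  | func f _ => exact f.elim

theorem DuplicatorWins.realize_iff {α : Type*} {n : ℕ} {φ : Language.graph.BoundedFormula α n}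
    (hφ : quantifierRank φ ≤ k) (h : DuplicatorWins G H k P) {x : α → V} {y : α → W}
    {xs : Fin n → V} {ys : Fin n → W} (hx : ∀ a, (x a, y a) ∈ P) (hxs : ∀ i, (xs i, ys i) ∈ P) :
    (letI := G.structure; φ.Realize x xs) ↔ (letI := H.structure; φ.Realize y ys) := by
  have hmem : ∀ c, (Sum.elim x xs c, Sum.elim y ys c) ∈ P := Sum.rec hx hxs
  induction φ generalizing k P with
  | falsum => exact Iff.rfl
  | equal t₁ t₂ =>
    obtain ⟨a, rfl⟩ := graph_term_eq_var t₁
    obtain ⟨b, rfl⟩ := graph_term_eq_var t₂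
    exact (h.isPartialIso _ (hmem a) _ (hmem b)).1
  | rel R ts =>
    cases R
    obtain ⟨a, ha⟩ := graph_term_eq_var (ts 0)
    obtain ⟨b, hb⟩ := graph_term_eq_var (ts 1)
    let := G.structure
    let := H.structure
    change G.Adj ((ts 0).realize (Sum.elim x xs)) ((ts 1).realize (Sum.elim x xs)) ↔
      H.Adj ((ts 0).realize (Sum.elim y ys)) ((ts 1).realize (Sum.elim y ys))
    rw [ha, hb]
    exact (h.isPartialIso _ (hmem a) _ (hmem b)).2
  | imp φ₁ φ₂ ih₁ ih₂ =>
    exact imp_congr (ih₁ ((le_max_left _ _).trans hφ) h hx hxs hmem)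
      (ih₂ ((le_max_right _ _).trans hφ) h hx hxs hmem)
  | all φ ih =>
    obtain ⟨k, rfl⟩ := Nat.exists_eq_succ_of_ne_zero (Nat.ne_zero_of_lt hφ)
    obtain ⟨-, forth, back⟩ := h
    have realize_snoc : ∀ v w, DuplicatorWins G H k (insert (v, w) P) →
        ((letI := G.structure; φ.Realize x (Fin.snoc xs v)) ↔
          (letI := H.structure; φ.Realize y (Fin.snoc ys w))) := by
      intro v w hvw
      have hsnoc : ∀ i, ((Fin.snoc xs v : Fin _ → V) i, (Fin.snoc ys w : Fin _ → W) i) ∈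
          (insert (v, w) P : SetRel V W) :=
        Fin.lastCases (by simp) fun i => by simpa using Or.inr (hxs i)
      have hx' : ∀ a, (x a, y a) ∈ (insert (v, w) P : SetRel V W) := fun a => Or.inr (hx a)
      exact ih (Nat.le_of_succ_le_succ hφ) hvw hx' hsnoc (Sum.rec hx' hsnoc)
    constructor
    · intro hv w
      obtain ⟨v, hvw⟩ := back w
      exact (realize_snoc v w hvw).1 (hv v)
    · intro hw v
      obtain ⟨w, hvw⟩ := forth v
      exact (realize_snoc v w hvw).2 (hw w)

end EhrenfeuchtFraisse

theorem DuplicatorWins.satFO_iff {V W : Type} {G : SimpleGraph V} {H : SimpleGraph W}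
    {P : SetRel V W} {φ : Language.graph.Sentence}
    (h : DuplicatorWins G H (quantifierRank φ) P) : SatFO G φ ↔ SatFO H φ :=
  h.realize_iff le_rfl (fun a => a.elim) fun i => i.elim0

theorem satFO_congr {V W : Type} {G : SimpleGraph V} {H : SimpleGraph W} (e : G ≃g H)
    (φ : Language.graph.Sentence) : SatFO G φ ↔ SatFO H φ := by
  let := G.structure
  let := H.structure
  have e' : Language.graph.Equiv V W :=
    { e.toEquiv with
      map_fun' := fun f => f.elim
      map_rel' := by rintro _ ⟨⟩ x; exact e.map_adj_iff }
  exact Language.StrongHomClass.realize_sentence e' φ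

/-! ### The local game -/

section LocalGame

variable {U V W : Type*} {F : SimpleGraph U} {G : SimpleGraph V} {H : SimpleGraph W} {k D : ℕ}
  {P Q : SetRel V W}

/-- Corresponding pairs of vertices have the same distance in `G` and in `H`, as far as
distances up to `D` can be told apart. -/
def DistAgree (G : SimpleGraph V) (H : SimpleGraph W) (D : ℕ) (P : SetRel V W) : Prop :=
  ∀ p ∈ P, ∀ q ∈ P, ∀ d : ℕ, d ≤ D → (G.edist p.1 q.1 ≤ d ↔ H.edist p.2 q.2 ≤ d)

theorem DistAgree.mono {D' : ℕ} (h : DistAgree G H D P) (hQ : Q ⊆ P) (hD : D' ≤ D) :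
    DistAgree G H D' Q :=
  fun p hp q hq d hd => h p (hQ hp) q (hQ hq) d (hd.trans hD)

theorem DistAgree.inv (h : DistAgree G H D P) : DistAgree H G D P.inv :=
  fun _ hp _ hq d hd => (h _ hp _ hq d hd).symm

theorem DistAgree.comp {R : SetRel U V} (hR : DistAgree F G D R) (hP : DistAgree G H D P) :
    DistAgree F H D (R.comp P) := by
  rintro p ⟨y, hpy, hyp⟩ q ⟨z, hqz, hzq⟩ d hd
  exact (hR _ hpy _ hqz d hd).trans (hP _ hyp _ hzq d hd)

theorem DistAgree.isPartialIso (h : DistAgree G H D P) (hD : 1 ≤ D) : IsPartialIso G H P := by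
  intro p hp q hq
  have heq : p.1 = q.1 ↔ p.2 = q.2 := by
    simpa only [Nat.cast_zero, nonpos_iff_eq_zero, SimpleGraph.edist_eq_zero_iff]
      using h p hp q hq 0 (Nat.zero_le _)
  have hone : G.Adj p.1 q.1 ∨ p.1 = q.1 ↔ H.Adj p.2 q.2 ∨ p.2 = q.2 := by
    simpa only [Nat.cast_one, SimpleGraph.edist_le_one_iff_adj_or_eq] using h p hp q hq 1 hD
  refine ⟨heq, fun hadj => ?_, fun hadj => ?_⟩
  · exact (hone.1 (Or.inl hadj)).resolve_right fun e => hadj.ne (heq.2 e)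
  · exact (hone.2 (Or.inl hadj)).resolve_right fun e => hadj.ne (heq.1 e)

/-- Duplicator wins the `k`-round local game from the position `P`: with `k + 1` rounds left,
Spoiler must choose a vertex at distance at most `2 ^ k` from one already chosen, and Duplicator
must preserve all distances up to `2 ^ (k + 1)`. -/
def LocalWins (G : SimpleGraph V) (H : SimpleGraph W) : ℕ → SetRel V W → Prop
  | 0, P => DistAgree G H 1 P
  | k + 1, P => DistAgree G H (2 ^ (k + 1)) P ∧
      (∀ v, ∀ p ∈ P, G.edist p.1 v ≤ (2 ^ k : ℕ) → ∃ w, LocalWins G H k (insert (v, w) P)) ∧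
      (∀ w, ∀ p ∈ P, H.edist p.2 w ≤ (2 ^ k : ℕ) → ∃ v, LocalWins G H k (insert (v, w) P))

namespace LocalWins

theorem distAgree (h : LocalWins G H k P) : DistAgree G H (2 ^ k) P := by
  cases k with
  | zero => exact h
  | succ k => exact h.1

theorem inv (h : LocalWins G H k P) : LocalWins H G k P.inv := by
  have insert_inv : ∀ (v : V) (w : W) (P : SetRel V W),
      SetRel.inv (insert (v, w) P) = insert (w, v) P.inv := by
    intro v w P
    ext ⟨a, b⟩
    simp [Prod.ext_iff, and_comm]
  induction k generalizing P with
  | zero => exact h.distAgree.inv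
  | succ k ih =>
    obtain ⟨hP, forth, back⟩ := h
    refine ⟨hP.inv, fun w p hp hd => ?_, fun v p hp hd => ?_⟩
    · obtain ⟨v, hv⟩ := back w _ hp hd
      exact ⟨v, insert_inv v w P ▸ ih hv⟩
    · obtain ⟨w, hw⟩ := forth v _ hp hd
      exact ⟨w, insert_inv v w P ▸ ih hw⟩

theorem subset (h : LocalWins G H k P) (hQ : Q ⊆ P) : LocalWins G H k Q := by
  induction k generalizing P Q with
  | zero => exact h.distAgree.mono hQ le_rfl
  | succ k ih =>
    obtain ⟨hP, forth, back⟩ := h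
    refine ⟨hP.mono hQ le_rfl, fun v p hp hd => ?_, fun w p hp hd => ?_⟩
    · obtain ⟨w, hw⟩ := forth v p (hQ hp) hd
      exact ⟨w, ih hw (Set.insert_subset_insert hQ)⟩
    · obtain ⟨v, hv⟩ := back w p (hQ hp) hd
      exact ⟨v, ih hv (Set.insert_subset_insert hQ)⟩

theorem pred (h : LocalWins G H (k + 1) P) : LocalWins G H k P := by
  induction k generalizing P with
  | zero => exact h.distAgree.mono subset_rfl (by norm_num)
  | succ k ih =>
    obtain ⟨hP, forth, back⟩ := h
    have hle : ((2 ^ k : ℕ) : ℕ∞) ≤ (2 ^ (k + 1) : ℕ) := by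
      exact_mod_cast Nat.pow_le_pow_right two_pos k.le_succ
    refine ⟨hP.mono subset_rfl (Nat.pow_le_pow_right two_pos (by omega)), fun v p hp hd => ?_,
      fun w p hp hd => ?_⟩
    · obtain ⟨w, hw⟩ := forth v p hp (hd.trans hle)
      exact ⟨w, ih hw⟩
    · obtain ⟨v, hv⟩ := back w p hp (hd.trans hle)
      exact ⟨v, ih hv⟩

theorem of_le {j : ℕ} (h : LocalWins G H k P) (hj : j ≤ k) : LocalWins G H j P := by
  induction hj with
  | refl => exact h
  | step _ ih => exact ih h.pred

theorem comp {R : SetRel U V} (hR : LocalWins F G k R) (hP : LocalWins G H k P) :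
    LocalWins F H k (R.comp P) := by
  have insert_comp_subset : ∀ (R : SetRel U V) (P : SetRel V W) (u : U) (v : V) (w : W),
      insert (u, w) (R.comp P) ⊆ SetRel.comp (insert (u, v) R) (insert (v, w) P) := by
    rintro R P u v w ⟨a, b⟩ (hab | ⟨y, hy, hy'⟩)
    · obtain ⟨rfl, rfl⟩ := Prod.ext_iff.1 hab
      exact ⟨v, Or.inl rfl, Or.inl rfl⟩
    · exact ⟨y, Or.inr hy, Or.inr hy'⟩
  induction k generalizing R P with
  | zero => exact hR.distAgree.comp hP.distAgree
  | succ k ih =>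
    refine ⟨hR.distAgree.comp hP.distAgree, ?_, ?_⟩
    · rintro u p ⟨y, hpy, hyp⟩ hd
      obtain ⟨v, hv⟩ := hR.2.1 u _ hpy hd
      obtain ⟨w, hw⟩ := hP.2.1 v _ hyp
        ((hv.distAgree _ (Or.inr hpy) _ (Or.inl rfl) _ le_rfl).1 hd)
      exact ⟨w, (ih hv hw).subset (insert_comp_subset _ _ _ _ _)⟩
    · rintro w p ⟨y, hpy, hyp⟩ hd
      obtain ⟨v, hv⟩ := hP.2.2 w _ hyp hd
      obtain ⟨u, hu⟩ := hR.2.2 v _ hpy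
        ((hv.distAgree _ (Or.inr hyp) _ (Or.inl rfl) _ le_rfl).2 hd)
      exact ⟨u, (ih hu hv).subset (insert_comp_subset _ _ _ _ _)⟩

theorem symm_singleton {v : V} {w : W} (h : LocalWins G H k {(v, w)}) :
    LocalWins H G k {(w, v)} :=
  h.inv.subset (Set.singleton_subset_iff.2 rfl)

theorem trans_singleton {u : U} {v : V} {w : W} (h : LocalWins F G k {(u, v)})
    (h' : LocalWins G H k {(v, w)}) : LocalWins F H k {(u, w)} :=
  (h.comp h').subset (Set.singleton_subset_iff.2 ⟨v, rfl, rfl⟩)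

end LocalWins

/-- Every pair of `P` is at distance more than `D` from every pair of `Q`, in both graphs. -/
def FarApart (G : SimpleGraph V) (H : SimpleGraph W) (D : ℕ) (P Q : SetRel V W) : Prop :=
  ∀ p ∈ P, ∀ q ∈ Q, D < G.edist p.1 q.1 ∧ D < H.edist p.2 q.2

namespace FarApart

theorem symm (h : FarApart G H D P Q) : FarApart G H D Q P := by
  intro p hp q hq
  rw [SimpleGraph.edist_comm, SimpleGraph.edist_comm (G := H)]
  exact h q hq p hp

theorem inv (h : FarApart G H D P Q) : FarApart H G D P.inv Q.inv :=
  fun _ hp _ hq => (h _ hp _ hq).symm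

end FarApart

theorem lt_edist_of_edist_le {u v w : V} {D D' : ℕ} (h : ((D + D' : ℕ) : ℕ∞) < G.edist u v)
    (hw : G.edist u w ≤ D) : D' < G.edist w v := by
  by_contra! hcon
  rw [Nat.cast_add] at h
  exact h.not_ge (G.edist_triangle.trans (add_le_add hw hcon))

theorem FarApart.insert {v : V} {w : W} {p : V × W} (h : FarApart G H (2 * D) P Q) (hp : p ∈ P)
    (hv : G.edist p.1 v ≤ D) (hw : H.edist p.2 w ≤ D) : FarApart G H D (insert (v, w) P) Q := by
  rw [two_mul] at h
  rintro r (rfl | hr) q hq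
  · exact ⟨lt_edist_of_edist_le (h p hp q hq).1 hv, lt_edist_of_edist_le (h p hp q hq).2 hw⟩
  · have hle : (D : ℕ∞) ≤ (D + D : ℕ) := by exact_mod_cast Nat.le_add_right D D
    exact ⟨hle.trans_lt (h r hr q hq).1, hle.trans_lt (h r hr q hq).2⟩

theorem DistAgree.union (hP : DistAgree G H D P) (hQ : DistAgree G H D Q)
    (hPQ : FarApart G H D P Q) : DistAgree G H D (P ∪ Q) := by
  have across : ∀ {P Q : SetRel V W}, FarApart G H D P Q → ∀ p ∈ P, ∀ q ∈ Q, ∀ d : ℕ, d ≤ D →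
      (G.edist p.1 q.1 ≤ d ↔ H.edist p.2 q.2 ≤ d) := by
    intro P Q hPQ p hp q hq d hd
    have hd' : (d : ℕ∞) ≤ D := by exact_mod_cast hd
    exact iff_of_false (hd'.trans_lt (hPQ p hp q hq).1).not_ge
      (hd'.trans_lt (hPQ p hp q hq).2).not_ge
  rintro p (hp | hp) q (hq | hq)
  · exact hP p hp q hq
  · exact across hPQ p hp q hq
  · exact across hPQ.symm p hp q hq
  · exact hQ p hp q hq

namespace LocalWins

theorem exists_insert_union
    (union : ∀ {P Q : SetRel V W}, LocalWins G H k P → LocalWins G H k Q →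
      FarApart G H (2 ^ k) P Q → LocalWins G H k (P ∪ Q))
    (hP : LocalWins G H (k + 1) P) (hQ : LocalWins G H (k + 1) Q)
    (hPQ : FarApart G H (2 ^ (k + 1)) P Q) {v : V} {p : V × W} (hp : p ∈ P ∪ Q)
    (hv : G.edist p.1 v ≤ (2 ^ k : ℕ)) : ∃ w, LocalWins G H k (insert (v, w) (P ∪ Q)) := by
  wlog hpP : p ∈ P generalizing P Q
  · rw [Set.union_comm] at hp ⊢
    exact this hQ hP hPQ.symm hp (hp.resolve_right hpP)
  obtain ⟨w, hw⟩ := hP.2.1 v p hpP hv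
  have hpw : H.edist p.2 w ≤ (2 ^ k : ℕ) :=
    (hw.distAgree _ (Or.inr hpP) _ (Or.inl rfl) _ le_rfl).1 hv
  rw [pow_succ'] at hPQ
  refine ⟨w, ?_⟩
  rw [← Set.insert_union]
  exact union hw hQ.pred (hPQ.insert hpP hv hpw)

theorem union (hP : LocalWins G H k P) (hQ : LocalWins G H k Q)
    (hPQ : FarApart G H (2 ^ k) P Q) : LocalWins G H k (P ∪ Q) := by
  induction k generalizing P Q with
  | zero => exact hP.distAgree.union hQ.distAgree hPQ
  | succ k ih =>
    refine ⟨hP.distAgree.union hQ.distAgree hPQ,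
      fun v p hp hv => exists_insert_union ih hP hQ hPQ hp hv, fun w p hp hw => ?_⟩
    obtain ⟨v, hv⟩ := exists_insert_union (fun h h' hfar => (ih h.inv h'.inv hfar.inv).inv)
      hP.inv hQ.inv hPQ.inv (p := p.swap) hp hw
    exact ⟨v, hv.inv.subset (Set.insert_subset (Or.inl rfl) fun q hq => Or.inr hq)⟩

end LocalWins

end LocalGame

/-! ### Finitely many local types -/

section LocalType

variable {V W : Type*} {G : SimpleGraph V} {H : SimpleGraph W} {n : ℕ}

/-- The table of all comparisons of a distance between two of the vertices `x i` with a
number `d ≤ D`. -/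
def distTable (G : SimpleGraph V) (D : ℕ) (x : Fin n → V) : Fin n → Fin n → Fin (D + 1) → Prop :=
  fun i j d => G.edist (x i) (x j) ≤ (d : ℕ)

/-- The possible isomorphism types of `n`-tuples with respect to the `k`-round local game. -/
def LocalType : ℕ → ℕ → Type
  | 0, n => Fin n → Fin n → Fin 2 → Prop
  | k + 1, n => (Fin n → Fin n → Fin (2 ^ (k + 1) + 1) → Prop) × Set (LocalType k (n + 1))

instance LocalType.finite (k n : ℕ) : Finite (LocalType k n) := by
  induction k generalizing n with
  | zero => exact inferInstanceAs (Finite (Fin n → Fin n → Fin 2 → Prop))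
  | succ k ih =>
    exact inferInstanceAs
      (Finite ((Fin n → Fin n → Fin (2 ^ (k + 1) + 1) → Prop) × Set (LocalType k (n + 1))))

/-- The local type of a tuple: its distances, and the local types of its admissible one-point
extensions. -/
def localType (G : SimpleGraph V) : (k : ℕ) → {n : ℕ} → (Fin n → V) → LocalType k n
  | 0, _, x => distTable G 1 x
  | k + 1, _, x => (distTable G (2 ^ (k + 1)) x,
      {t | ∃ i v, G.edist (x i) v ≤ (2 ^ k : ℕ) ∧ localType G k (Fin.cons v x : Fin _ → V) = t})

theorem distAgree_of_distTable_eq {D : ℕ} {x : Fin n → V} {y : Fin n → W}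
    (h : distTable G D x = distTable H D y) :
    DistAgree G H D (Set.range fun i => (x i, y i)) := by
  rintro _ ⟨i, rfl⟩ _ ⟨j, rfl⟩ d hd
  exact iff_of_eq (congrFun (congrFun (congrFun h i) j) ⟨d, Nat.lt_succ_of_le hd⟩)

theorem localWins_of_localType_eq {k : ℕ} {x : Fin n → V} {y : Fin n → W}
    (h : localType G k x = localType H k y) :
    LocalWins G H k (Set.range fun i => (x i, y i)) := by
  induction k generalizing n with
  | zero => exact distAgree_of_distTable_eq h
  | succ k ih =>
    have range_cons : ∀ v w, (Set.range fun i => ((Fin.cons v x : Fin (n + 1) → V) i,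
        (Fin.cons w y : Fin (n + 1) → W) i)) = insert (v, w) (Set.range fun i => (x i, y i)) := by
      intro v w
      ext p
      simp only [Set.mem_range, Set.mem_insert_iff, Fin.exists_fin_succ, Fin.cons_zero,
        Fin.cons_succ, eq_comm (a := p)]
    obtain ⟨htable, hext⟩ := Prod.ext_iff.1 h
    refine ⟨distAgree_of_distTable_eq htable, ?_, ?_⟩
    · rintro v _ ⟨i, rfl⟩ hd
      obtain ⟨-, w, -, hw⟩ := hext.subset ⟨i, v, hd, rfl⟩
      exact ⟨w, range_cons v w ▸ ih hw.symm⟩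
    · rintro w _ ⟨i, rfl⟩ hd
      obtain ⟨-, v, -, hv⟩ := hext.superset ⟨i, w, hd, rfl⟩
      exact ⟨v, range_cons v w ▸ ih hv⟩

end LocalType

/-! ### The global game -/

section GlobalGame

variable {V W : Type*} {G : SimpleGraph V} {H : SimpleGraph W} {k q : ℕ} {P : SetRel V W}

theorem exists_forall_lt_edist {ι : Type*} [Fintype ι] {D : ℕ} {s : Finset W} {d : ι → W}
    (hs : s.card < Fintype.card ι)
    (hd : Pairwise fun i j => ((2 * D : ℕ) : ℕ∞) < H.edist (d i) (d j)) :
    ∃ i, ∀ w ∈ s, D < H.edist w (d i) := by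
  by_contra! hcon
  choose g hgs hg using hcon
  obtain ⟨i, -, j, -, hij, hgij⟩ := Finset.exists_ne_map_eq_of_card_lt_of_maps_to
    (s := Finset.univ) hs fun i _ => hgs i
  have hfar := hd hij
  rw [two_mul] at hfar
  exact (lt_edist_of_edist_le hfar (SimpleGraph.edist_comm.trans_le (hg i))).not_ge
    (hgij ▸ hg j)

/-- Every vertex of `G` not yet played in `P` has `q + 1` twins in `H` with respect to the
`q`-round local game, far away from each other and in components of `H` that `P` does not meet.
This is what Duplicator needs in order to answer a move far away from all earlier ones. -/
def Rich (G : SimpleGraph V) (H : SimpleGraph W) (q : ℕ) (P : SetRel V W) : Prop :=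
  ∀ v, (∃ w, (v, w) ∈ P) ∨ ∃ d : Fin (q + 1) → W,
    (Pairwise fun i j => ((2 ^ (q + 1) : ℕ) : ℕ∞) < H.edist (d i) (d j)) ∧
      ∀ i, (∀ p ∈ P, ¬H.Reachable p.2 (d i)) ∧ LocalWins G H q {(v, d i)}

theorem Rich.exists_localWins_insert (hP : Rich G H q P) {s : Finset (V × W)}
    (hs : s.card + k < q) (h : LocalWins G H (k + 1) (s ∪ P)) (v : V) :
    ∃ w, LocalWins G H k (insert (v, w) (s ∪ P)) := by
  classical
  by_cases hnear : ∃ p ∈ (s ∪ P : SetRel V W), G.edist p.1 v ≤ (2 ^ k : ℕ)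
  · obtain ⟨p, hp, hpv⟩ := hnear
    exact h.2.1 v p hp hpv
  push Not at hnear
  rcases hP v with ⟨w, hw⟩ | ⟨d, hd, htwin⟩
  · exact absurd (hnear _ (Or.inr hw)) (by simp)
  have hcard : (s.image Prod.snd).card < Fintype.card (Fin (q + 1)) := by
    rw [Fintype.card_fin]
    exact Finset.card_image_le.trans_lt (by omega)
  obtain ⟨i, hi⟩ := exists_forall_lt_edist hcard (by simpa only [pow_succ'] using hd)
  have hkq : ((2 ^ k : ℕ) : ℕ∞) ≤ (2 ^ q : ℕ) := by
    exact_mod_cast Nat.pow_le_pow_right two_pos (by omega)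
  refine ⟨d i, ?_⟩
  rw [← Set.union_singleton]
  refine h.pred.union ((htwin i).2.of_le (by omega)) ?_
  rintro p (hp | hp) _ rfl
  · exact ⟨hnear p (Or.inl hp), hkq.trans_lt (hi _ (Finset.mem_image_of_mem _ hp))⟩
  · refine ⟨hnear p (Or.inr hp), ?_⟩
    rw [SimpleGraph.edist_eq_top_of_not_reachable ((htwin i).1 p hp)]
    exact ENat.natCast_lt_top _

theorem duplicatorWins_of_rich (hGH : Rich G H q P) (hHG : Rich H G q P.inv)
    {s : Finset (V × W)} (hs : s.card + k ≤ q) (h : LocalWins G H k (s ∪ P)) :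
    DuplicatorWins G H k (s ∪ P) := by
  classical
  induction k generalizing s with
  | zero => exact h.distAgree.isPartialIso le_rfl
  | succ k ih =>
    have wins_insert : ∀ v w, LocalWins G H k (insert (v, w) (s ∪ P)) →
        DuplicatorWins G H k (insert (v, w) (s ∪ P)) := by
      intro v w hvw
      rw [← Set.insert_union, ← Finset.coe_insert] at hvw ⊢
      have := Finset.card_insert_le (v, w) s
      exact ih (by omega) hvw
    refine ⟨h.distAgree.isPartialIso Nat.one_le_two_pow, fun v => ?_, fun w => ?_⟩
    · obtain ⟨w, hw⟩ := hGH.exists_localWins_insert hs h v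
      exact ⟨w, wins_insert v w hw⟩
    · have hinv : SetRel.inv (s ∪ P) = (s.image Prod.swap ∪ P.inv : SetRel W V) := by
        rw [Finset.coe_image, Set.image_swap_eq_preimage_swap]
        rfl
      obtain ⟨v, hv⟩ := hHG.exists_localWins_insert
        (lt_of_le_of_lt (Nat.add_le_add_right Finset.card_image_le k) hs) (hinv ▸ h.inv) w
      rw [← hinv] at hv
      exact ⟨v, wins_insert v w (hv.inv.subset (Set.insert_subset (Or.inl rfl) fun _ => Or.inr))⟩

end GlobalGame

/-! ### Embeddings whose boundary is far away -/

section Embedding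

variable {V W : Type*} {G : SimpleGraph V} {H : SimpleGraph W} {k : ℕ}

theorem edist_map_le {f : V → W} (hf : ∀ a b, G.Adj a b → f a = f b ∨ H.Adj (f a) (f b))
    (a b : V) : H.edist (f a) (f b) ≤ G.edist a b := by
  refine le_iInf fun p => ?_
  induction p with
  | nil => simp
  | @cons a c b hac p ih =>
    have hstep : H.edist (f a) (f c) ≤ 1 :=
      SimpleGraph.edist_le_one_iff_adj_or_eq.2 (hf a c hac).symm
    calc H.edist (f a) (f b) ≤ H.edist (f a) (f c) + H.edist (f c) (f b) := H.edist_triangle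
      _ ≤ 1 + p.length := add_le_add hstep ih
      _ = (p.cons hac).length := by rw [SimpleGraph.Walk.length_cons, Nat.cast_succ, add_comm]

theorem edist_embedding_le (f : H ↪g G) (x y : W) : G.edist (f x) (f y) ≤ H.edist x y :=
  edist_map_le (fun _ _ h => Or.inr (f.map_adj_iff.2 h)) x y

theorem exists_eq_of_edist_le (f : H ↪g G) {x : W} {b : V} {d : ℕ}
    (hf : ∀ z, H.edist x z < d → ∀ c, G.Adj (f z) c → c ∈ Set.range f)
    (h : G.edist (f x) b ≤ d) : ∃ y, f y = b ∧ H.edist x y ≤ d := by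
  obtain ⟨p, hp⟩ := SimpleGraph.exists_walk_of_edist_ne_top
    (ne_top_of_le_ne_top (ENat.natCast_ne_top d) h)
  rw [← hp, Nat.cast_le] at h
  clear hp
  generalize ha : f x = a at p
  induction p generalizing x d with
  | nil => exact ⟨x, ha, by simp⟩
  | @cons a c b hac p ih =>
    subst ha
    rw [SimpleGraph.Walk.length_cons] at h
    obtain ⟨d, rfl⟩ := Nat.exists_eq_succ_of_ne_zero (Nat.ne_zero_of_lt h)
    obtain ⟨y, rfl⟩ := hf x (by simp) c hac
    have hxy : ∀ z (m : ℕ), H.edist y z ≤ m → H.edist x z ≤ (m + 1 : ℕ) := by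
      intro z m hz
      rw [Nat.cast_add, add_comm]
      exact H.edist_triangle.trans (add_le_add
        (SimpleGraph.edist_eq_one_iff_adj.2 (f.map_adj_iff.1 hac)).le hz)
    have hclosed : ∀ z, H.edist y z < d → ∀ c, G.Adj (f z) c → c ∈ Set.range f := by
      intro z hz
      obtain ⟨m, hm⟩ := ENat.ne_top_iff_exists.1 hz.ne_top
      rw [← hm, Nat.cast_lt] at hz
      exact hf z ((hxy z m hm.ge).trans_lt (by exact_mod_cast Nat.succ_lt_succ hz))
    obtain ⟨z, hz, hyz⟩ := ih hclosed rfl (Nat.le_of_succ_le_succ h)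
    exact ⟨z, hz, hxy z d hyz⟩

theorem distAgree_embedding (f : H ↪g G) {X : Set W} {D : ℕ}
    (hX : ∀ x ∈ X, ∀ z, H.edist x z < D → ∀ c, G.Adj (f z) c → c ∈ Set.range f) :
    DistAgree H G D ((fun x => (x, f x)) '' X) := by
  rintro _ ⟨x, hx, rfl⟩ _ ⟨y, -, rfl⟩ d hd
  refine ⟨(edist_embedding_le f x y).trans, fun h => ?_⟩
  have hd' : (d : ℕ∞) ≤ D := by exact_mod_cast hd
  obtain ⟨z, hz, hxz⟩ := exists_eq_of_edist_le f (fun z hz => hX x hx z (hz.trans_le hd')) h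
  rwa [← f.injective hz]

theorem localWins_embedding (f : H ↪g G) {X : Set W}
    (hX : ∀ x ∈ X, ∀ z, H.edist x z < (2 ^ k : ℕ) → ∀ c, G.Adj (f z) c → c ∈ Set.range f) :
    LocalWins H G k ((fun x => (x, f x)) '' X) := by
  induction k generalizing X with
  | zero => exact distAgree_embedding f hX
  | succ k ih =>
    have hle : ((2 ^ k : ℕ) : ℕ∞) ≤ (2 ^ (k + 1) : ℕ) := by
      exact_mod_cast Nat.pow_le_pow_right two_pos k.le_succ
    have wins_insert : ∀ x ∈ X, ∀ v, H.edist x v ≤ (2 ^ k : ℕ) →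
        LocalWins H G k (insert (v, f v) ((fun x => (x, f x)) '' X)) := by
      intro x hx v hv
      rw [← Set.image_insert_eq (f := fun x => (x, f x))]
      have hclosed : ∀ y ∈ insert v X, ∀ z, H.edist y z < (2 ^ k : ℕ) →
          ∀ c, G.Adj (f z) c → c ∈ Set.range f := by
        rintro y (rfl | hy) z hz
        · refine hX x hx z ((H.edist_triangle (v := y)).trans_lt ?_)
          rw [pow_succ, mul_two, Nat.cast_add]
          exact ENat.add_lt_add_of_le_of_lt (ne_top_of_le_ne_top (ENat.natCast_ne_top _) hv) hv hz
        · exact hX y hy z (hz.trans_le hle)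
      exact ih hclosed
    refine ⟨distAgree_embedding f hX, ?_, ?_⟩
    · rintro v _ ⟨x, hx, rfl⟩ hv
      exact ⟨f v, wins_insert x hx v hv⟩
    · rintro w _ ⟨x, hx, rfl⟩ hw
      obtain ⟨v, rfl, hv⟩ := exists_eq_of_edist_le f (fun z hz => hX x hx z (hz.trans_le hle)) hw
      exact ⟨v, wins_insert x hx v hv⟩

end Embedding

section ClosedRange

variable {U V W : Type*} {F : SimpleGraph U} {G : SimpleGraph V} {H : SimpleGraph W}

/-- The range of the embedding is a union of connected components: no edge leaves it. -/
def HasClosedRange (f : H ↪g G) : Prop :=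
  ∀ x b, G.Adj (f x) b → b ∈ Set.range f

theorem hasClosedRange_sumInl :
    HasClosedRange (SimpleGraph.Embedding.sumInl : G ↪g G ⊕g H) := by
  rintro x (b | b) hb
  · exact ⟨b, rfl⟩
  · exact absurd hb (by simp)

theorem hasClosedRange_sumInr :
    HasClosedRange (SimpleGraph.Embedding.sumInr : H ↪g G ⊕g H) := by
  rintro x (b | b) hb
  · exact absurd hb (by simp)
  · exact ⟨b, rfl⟩

namespace HasClosedRange

variable {f : H ↪g G}

theorem localWins (hf : HasClosedRange f) (k : ℕ) (X : Set W) :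
    LocalWins H G k ((fun x => (x, f x)) '' X) :=
  localWins_embedding f fun _ _ z _ => hf z

theorem localWins_singleton (hf : HasClosedRange f) (k : ℕ) (x : W) :
    LocalWins H G k {(x, f x)} :=
  (hf.localWins k {x}).subset (Set.singleton_subset_iff.2 ⟨x, rfl, rfl⟩)

theorem exists_eq_of_reachable (hf : HasClosedRange f) {x : W} {b : V}
    (h : G.Reachable (f x) b) : ∃ y, f y = b ∧ H.Reachable x y := by
  obtain ⟨d, hd⟩ := ENat.ne_top_iff_exists.1 (SimpleGraph.edist_ne_top_iff_reachable.2 h)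
  obtain ⟨y, hy, hxy⟩ := exists_eq_of_edist_le f (fun z _ => hf z) hd.ge
  exact ⟨y, hy, SimpleGraph.reachable_of_edist_ne_top
    (ne_top_of_le_ne_top (ENat.natCast_ne_top d) hxy)⟩

theorem nonempty_induce_supp_iso (hf : HasClosedRange f) (w : W) :
    Nonempty (H.induce (H.connectedComponentMk w).supp ≃g
      G.induce (G.connectedComponentMk (f w)).supp) := by
  let g : (H.connectedComponentMk w).supp → (G.connectedComponentMk (f w)).supp := fun x =>
    ⟨f x, SimpleGraph.ConnectedComponent.eq.2
      ((SimpleGraph.ConnectedComponent.eq.1 x.2).map f.toHom)⟩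
  have hg : Function.Bijective g := by
    refine ⟨fun x y hxy => Subtype.ext (f.injective (Subtype.ext_iff.1 hxy)), ?_⟩
    rintro ⟨b, hb⟩
    obtain ⟨y, rfl, hy⟩ := hf.exists_eq_of_reachable (SimpleGraph.ConnectedComponent.eq.1 hb).symm
    exact ⟨⟨y, SimpleGraph.ConnectedComponent.eq.2 hy.symm⟩, rfl⟩
  exact ⟨⟨Equiv.ofBijective g hg, f.map_adj_iff⟩⟩

end HasClosedRange

end ClosedRange

/-! ### Pendant copies -/

section Pendant

variable {V W : Type*} {G : SimpleGraph V} {H : SimpleGraph W}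

/-- The embedding is attached to the rest of `G` at the root only: `r` is the only vertex of `H`
whose image may have neighbours outside of the range. -/
def Pendant (f : H ↪g G) (r : W) : Prop :=
  ∀ x b, b ∉ Set.range f → G.Adj (f x) b → x = r

/-- `G` contains a copy of the rooted graph `(H, r)` which is attached to the rest of `G` at the
root only. -/
def HasPendantCopy (H : SimpleGraph W) (r : W) (G : SimpleGraph V) : Prop :=
  ∃ f : H ↪g G, Pendant f r

theorem HasClosedRange.pendant {f : H ↪g G} (hf : HasClosedRange f) (r : W) : Pendant f r :=
  fun x b hb h => absurd (hf x b h) hb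

namespace Pendant

variable {f : H ↪g G} {r : W}

-- Collapsing the outside of the range to the root is a retraction that does not increase distances.
theorem edist_le (hf : Pendant f r) (x y : W) : H.edist x y ≤ G.edist (f x) (f y) := by
  classical
  have : Nonempty W := ⟨r⟩
  let g : V → W := fun b => if b ∈ Set.range f then Function.invFun f b else r
  have hg : ∀ x, g (f x) = x := fun x => by
    simp only [g, Set.mem_range_self, if_true, Function.leftInverse_invFun f.injective x]
  have hg' : ∀ b, b ∉ Set.range f → g b = r := fun b hb => if_neg hb
  have hretract : ∀ a b, G.Adj a b → g a = g b ∨ H.Adj (g a) (g b) := by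
    intro a b hab
    by_cases ha : a ∈ Set.range f <;> by_cases hb : b ∈ Set.range f
    · obtain ⟨⟨a, rfl⟩, b, rfl⟩ := ha, hb
      rw [hg, hg]
      exact Or.inr (f.map_adj_iff.1 hab)
    · obtain ⟨a, rfl⟩ := ha
      rw [hg, hg' b hb]
      exact Or.inl (hf a b hb hab)
    · obtain ⟨b, rfl⟩ := hb
      rw [hg, hg' a ha]
      exact Or.inl (hf b a ha hab.symm).symm
    · rw [hg' a ha, hg' b hb]
      exact Or.inl rfl
  simpa only [hg] using edist_map_le hretract (f x) (f y)

theorem localWins (hf : Pendant f r) {k : ℕ} {v : W}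
    (hv : ((2 ^ k : ℕ) : ℕ∞) < H.edist v r) : LocalWins H G k {(v, f v)} := by
  refine (localWins_embedding f (X := {v}) ?_).subset (Set.singleton_subset_iff.2 ⟨v, rfl, rfl⟩)
  rintro _ rfl z hz c hc
  by_contra hcon
  exact (hf z c hcon hc ▸ hz).not_gt hv

end Pendant

end Pendant

section Sum

variable {U V W : Type*} {F : SimpleGraph U} {G : SimpleGraph V} {H : SimpleGraph W} {q : ℕ}

theorem localWins_sum_diagonal (k : ℕ) :
    LocalWins (G ⊕g F) (H ⊕g F) k (Set.range fun u => (Sum.inr u, Sum.inr u)) := by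
  refine ((hasClosedRange_sumInr.localWins k Set.univ).inv.comp
    (hasClosedRange_sumInr.localWins k Set.univ)).subset ?_
  rintro _ ⟨u, rfl⟩
  exact ⟨u, ⟨u, trivial, rfl⟩, ⟨u, trivial, rfl⟩⟩

theorem Rich.sum (h : Rich G H q ∅) :
    Rich (G ⊕g F) (H ⊕g F) q (Set.range fun u => (Sum.inr u, Sum.inr u)) := by
  rintro (v | u)
  · obtain ⟨d, hd, htwin⟩ := (h v).resolve_left fun ⟨_, hw⟩ => hw
    refine Or.inr ⟨fun i => Sum.inl (d i), fun i j hij => ?_, fun i => ⟨?_, ?_⟩⟩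
    · exact (hd hij).trans_le ((hasClosedRange_sumInl.pendant (d i)).edist_le _ _)
    · rintro _ ⟨u, rfl⟩ hu
      exact SimpleGraph.not_reachable_sum_inl_inr _ _ hu.symm
    · exact ((hasClosedRange_sumInl.localWins_singleton q v).symm_singleton.trans_singleton
        (htwin i).2).trans_singleton (hasClosedRange_sumInl.localWins_singleton q (d i))
  · exact Or.inl ⟨_, u, rfl⟩

theorem duplicatorWins_sum (hGH : Rich G H q ∅) (hHG : Rich H G q ∅) :
    DuplicatorWins (G ⊕g F) (H ⊕g F) q (Set.range fun u => (Sum.inr u, Sum.inr u)) := by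
  have hinv : SetRel.inv (Set.range fun u : U => ((Sum.inr u : V ⊕ U), (Sum.inr u : W ⊕ U))) =
      Set.range fun u => (Sum.inr u, Sum.inr u) := by
    ext ⟨x, y⟩
    simp only [SetRel.mem_inv, Set.mem_range, Prod.mk.injEq, and_comm]
  have hwins := duplicatorWins_of_rich (s := ∅) hGH.sum (hinv ▸ hHG.sum (F := F)) (by simp)
    ((localWins_sum_diagonal q).subset (by simp))
  simpa only [Finset.coe_empty, Set.empty_union] using hwins

end Sum

/-! ### Bridges -/

section Join

variable {V W : Type*} {G : SimpleGraph V} {H : SimpleGraph W} {r : V} {u : W}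

/-- The disjoint union of two rooted graphs, with a bridge added between the roots. -/
def bridgeJoin (G : SimpleGraph V) (r : V) (H : SimpleGraph W) (u : W) : SimpleGraph (V ⊕ W) :=
  (G ⊕g H) ⊔ SimpleGraph.edge (Sum.inl r) (Sum.inr u)

@[simp]
theorem bridgeJoin_adj_inl_inl {a b : V} :
    (bridgeJoin G r H u).Adj (Sum.inl a) (Sum.inl b) ↔ G.Adj a b := by
  simp [bridgeJoin, SimpleGraph.edge_adj]

@[simp]
theorem bridgeJoin_adj_inr_inr {a b : W} :
    (bridgeJoin G r H u).Adj (Sum.inr a) (Sum.inr b) ↔ H.Adj a b := by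
  simp [bridgeJoin, SimpleGraph.edge_adj]

@[simp]
theorem bridgeJoin_adj_inl_inr {a : V} {b : W} :
    (bridgeJoin G r H u).Adj (Sum.inl a) (Sum.inr b) ↔ a = r ∧ b = u := by
  simp [bridgeJoin, SimpleGraph.edge_adj]

@[simp]
theorem bridgeJoin_adj_inr_inl {a : V} {b : W} :
    (bridgeJoin G r H u).Adj (Sum.inr b) (Sum.inl a) ↔ a = r ∧ b = u := by
  rw [SimpleGraph.adj_comm, bridgeJoin_adj_inl_inr]

/-- The embedding of the first graph into `bridgeJoin G r H u`. -/
def bridgeJoinInl (G : SimpleGraph V) (r : V) (H : SimpleGraph W) (u : W) :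
    G ↪g bridgeJoin G r H u :=
  ⟨⟨Sum.inl, Sum.inl_injective⟩, bridgeJoin_adj_inl_inl⟩

/-- The embedding of the second graph into `bridgeJoin G r H u`. -/
def bridgeJoinInr (G : SimpleGraph V) (r : V) (H : SimpleGraph W) (u : W) :
    H ↪g bridgeJoin G r H u :=
  ⟨⟨Sum.inr, Sum.inr_injective⟩, bridgeJoin_adj_inr_inr⟩

theorem pendant_bridgeJoinInl : Pendant (bridgeJoinInl G r H u) r := by
  rintro x (b | b) hb h
  · exact absurd ⟨b, rfl⟩ hb
  · exact (bridgeJoin_adj_inl_inr.1 h).1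

theorem pendant_bridgeJoinInr : Pendant (bridgeJoinInr G r H u) u := by
  rintro x (b | b) hb h
  · exact (bridgeJoin_adj_inr_inl.1 h).2
  · exact absurd ⟨b, rfl⟩ hb

theorem bridgeJoin_connected (hG : G.Connected) (hH : H.Connected) :
    (bridgeJoin G r H u).Connected :=
  hG.sum_sup_edge hH

theorem edist_le_bridgeJoin_edist (a : V) (b : W) :
    H.edist b u ≤ (bridgeJoin G r H u).edist (Sum.inr b) (Sum.inl a) := by
  refine edist_map_le (f := Sum.elim (fun _ => u) id) ?_ (Sum.inr b) (Sum.inl a)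
  rintro (x | x) (y | y) h <;> simp_all

-- A walk starting at an attached vertex has to pass through the root first.
theorem edist_add_one_le_bridgeJoin_singleton_edist (a : V) :
    G.edist r a + 1 ≤
      (bridgeJoin G r (⊥ : SimpleGraph (Fin 1)) 0).edist (Sum.inr 0) (Sum.inl a) := by
  refine le_iInf fun p => ?_
  cases p with
  | @cons _ c _ h p =>
    rcases c with c | c
    · obtain ⟨rfl, -⟩ := bridgeJoin_adj_inr_inl.1 h
      rw [SimpleGraph.Walk.length_cons, Nat.cast_succ]
      exact add_le_add_left ((pendant_bridgeJoinInl.edist_le c a).trans (SimpleGraph.edist_le p)) 1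
    · exact absurd (bridgeJoin_adj_inr_inr.1 h) (by simp)

end Join

/-! ### Decisive rooted graphs in an addable class -/

section AddableClass

variable {C : GraphClassOn}

theorem ClassDecomposable.iff_forall_induce_supp (hC : ClassDecomposable C) {V : Type} [Finite V]
    (G : SimpleGraph V) : C V G ↔ ∀ v : V,
      C (G.connectedComponentMk v).supp (G.induce (G.connectedComponentMk v).supp) := by
  rw [hC V G]
  exact ⟨fun h v => h _, fun h c => c.ind h⟩

variable {V W : Type} {G : SimpleGraph V} {H : SimpleGraph W} {r : V} {u : W}

theorem ClassDecomposable.sum_iff [Finite V] [Finite W] (hC : ClassDecomposable C)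
    (hIso : ClassIsoInvariant C) : C (V ⊕ W) (G ⊕g H) ↔ C V G ∧ C W H := by
  rw [hC.iff_forall_induce_supp, hC.iff_forall_induce_supp G, hC.iff_forall_induce_supp H,
    Sum.forall]
  have hl := fun v => hIso _ _ _ _
    ((hasClosedRange_sumInl (G := G) (H := H)).nonempty_induce_supp_iso v)
  have hr := fun v => hIso _ _ _ _
    ((hasClosedRange_sumInr (G := G) (H := H)).nonempty_induce_supp_iso v)
  exact and_congr (forall_congr' fun v => (hl v).symm) (forall_congr' fun v => (hr v).symm)

theorem ClassAddable.bridgeJoin_mem [Finite V] [Finite W] (hC : ClassAddable C)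
    (hIso : ClassIsoInvariant C) (hG : C V G) (hH : C W H) :
    C (V ⊕ W) (bridgeJoin G r H u) :=
  hC.2 _ _ _ _ ((hC.1.sum_iff hIso).2 ⟨hG, hH⟩) (SimpleGraph.not_reachable_sum_inl_inr r u)

theorem ClassAddable.exists_connected_le_edist (hC : ClassAddable C) (hIso : ClassIsoInvariant C)
    (hpt : C (Fin 1) ⊥) (n : ℕ) : ∃ (V : Type) (_ : Finite V) (G : SimpleGraph V) (r y : V),
      C V G ∧ G.Connected ∧ n ≤ G.edist r y := by
  have hpt_conn : (⊥ : SimpleGraph (Fin 1)).Connected :=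
    SimpleGraph.connected_bot_iff.2 ⟨inferInstance, inferInstance⟩
  induction n with
  | zero => exact ⟨Fin 1, inferInstance, ⊥, 0, 0, hpt, hpt_conn, by simp⟩
  | succ n ih =>
    obtain ⟨V, _, G, r, y, hG, hconn, hn⟩ := ih
    refine ⟨V ⊕ Fin 1, inferInstance, bridgeJoin G r ⊥ 0, Sum.inr 0, Sum.inl y,
      hC.bridgeJoin_mem hIso hG hpt, bridgeJoin_connected hconn hpt_conn, ?_⟩
    rw [Nat.cast_succ]
    exact (add_le_add_left hn 1).trans (edist_add_one_le_bridgeJoin_singleton_edist y)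

theorem ClassAddable.exists_connected_of_family (hC : ClassAddable C)
    (hIso : ClassIsoInvariant C) (hpt : C (Fin 1) ⊥) {q E : ℕ} (hqE : 2 ^ q ≤ E) {ι : Type*}
    {B : ι → Type} [∀ i, Finite (B i)] {J : ∀ i, SimpleGraph (B i)} {v u : ∀ i, B i}
    (hJ : ∀ i, C (B i) (J i)) (hconn : ∀ i, (J i).Connected)
    (hfar : ∀ i, (E : ℕ∞) < (J i).edist (v i) (u i)) (s : Finset ι) :
    ∃ (V : Type) (_ : Finite V) (M : SimpleGraph V) (r p p' : V) (x : ι → V),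
      C V M ∧ M.Connected ∧ ((2 * E + 1 : ℕ) : ℕ∞) ≤ M.edist p p' ∧
      ((s : Set ι).Pairwise fun i j => (E : ℕ∞) < M.edist (x i) (x j)) ∧
      ∀ i ∈ s, (E : ℕ∞) < M.edist (x i) r ∧ LocalWins (J i) M q {(v i, x i)} := by
  classical
  induction s using Finset.induction_on with
  | empty =>
    obtain ⟨V, hV, M, p, p', hM, hMconn, hp⟩ := hC.exists_connected_le_edist hIso hpt (2 * E + 1)
    exact ⟨V, hV, M, p, p, p', fun _ => p, hM, hMconn, hp, by simp, by simp⟩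
  | insert a s ha ih =>
    obtain ⟨V, _, M, r, p, p', x, hM, hMconn, hp, hsep, hx⟩ := ih
    have hne : ∀ i ∈ s, i ≠ a := fun i hi h => ha (h ▸ hi)
    have hqE' : ((2 ^ q : ℕ) : ℕ∞) ≤ E := by exact_mod_cast hqE
    refine ⟨V ⊕ B a, inferInstance, _, Sum.inl r, Sum.inl p, Sum.inl p',
      Function.update (Sum.inl ∘ x) a (Sum.inr (v a)),
      hC.bridgeJoin_mem hIso hM (hJ a), bridgeJoin_connected (r := r) (u := u a) hMconn (hconn a),
      hp.trans (pendant_bridgeJoinInl.edist_le p p'), ?_, ?_⟩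
    · have hsymm : Std.Symm fun i j => (E : ℕ∞) < (bridgeJoin M r (J a) (u a)).edist
          (Function.update (Sum.inl ∘ x) a (Sum.inr (v a)) i)
          (Function.update (Sum.inl ∘ x) a (Sum.inr (v a)) j) :=
        ⟨fun i j h => by rwa [SimpleGraph.edist_comm]⟩
      rw [Finset.coe_insert, Set.pairwise_insert_of_symm]
      refine ⟨fun i hi j hj hij => ?_, fun i hi _ => ?_⟩
      · beta_reduce
        rw [Function.update_of_ne (hne i hi), Function.update_of_ne (hne j hj)]
        exact (hsep hi hj hij).trans_le (pendant_bridgeJoinInl.edist_le _ _)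
      · rw [Function.update_self, Function.update_of_ne (hne i hi)]
        exact (hfar a).trans_le (edist_le_bridgeJoin_edist _ _)
    · refine Finset.forall_mem_insert _ _ _ |>.2 ⟨?_, fun i hi => ?_⟩
      · rw [Function.update_self]
        exact ⟨(hfar a).trans_le (edist_le_bridgeJoin_edist _ _),
          pendant_bridgeJoinInr.localWins (hqE'.trans_lt (hfar a))⟩
      · rw [Function.update_of_ne (hne i hi)]
        obtain ⟨hxr, hwins⟩ := hx i hi
        exact ⟨hxr.trans_le (pendant_bridgeJoinInl.edist_le _ _),
          hwins.trans_singleton (pendant_bridgeJoinInl.localWins (hqE'.trans_lt hxr))⟩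

/-- The rooted graph `(M, r)` is universal for the `q`-round local game in the class `C`. A vertex
of a connected graph of `C` in which some vertex is at distance more than `2 ^ (q + 1)` from it has
`q + 1` twins in `M`, far away from each other and from the root; and `M` is so large that all
vertices of a graph with a pendant copy of `M` are of this kind. -/
structure IsUniversal (C : GraphClassOn) (q : ℕ) (M : SimpleGraph V) (r : V) : Prop where
  exists_le_edist : ∃ p p', ((2 * 2 ^ (q + 1) + 1 : ℕ) : ℕ∞) ≤ M.edist p p'
  exists_twins : ∀ {W : Type} [Finite W] {J : SimpleGraph W} {c u : W}, C W J → J.Connected →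
    ((2 ^ (q + 1) : ℕ) : ℕ∞) < J.edist c u → ∃ d : Fin (q + 1) → V,
      (Pairwise fun i j => ((2 ^ (q + 1) : ℕ) : ℕ∞) < M.edist (d i) (d j)) ∧
      ∀ i, ((2 ^ (q + 1) : ℕ) : ℕ∞) < M.edist (d i) r ∧ LocalWins J M q {(c, d i)}

theorem ClassAddable.exists_isUniversal (hC : ClassAddable C) (hIso : ClassIsoInvariant C)
    (hpt : C (Fin 1) ⊥) (q : ℕ) : ∃ (V : Type) (_ : Finite V) (M : SimpleGraph V) (r : V),
      C V M ∧ M.Connected ∧ IsUniversal C q M r := by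
  let T := {t : LocalType q 1 // ∃ (W : Type) (_ : Finite W) (J : SimpleGraph W) (c u : W),
    C W J ∧ J.Connected ∧ ((2 ^ (q + 1) : ℕ) : ℕ∞) < J.edist c u ∧
    localType J q (fun _ : Fin 1 => c) = t}
  choose B hB J v u hJ hconn hfar htype using fun t : T => t.2
  have := Fintype.ofFinite (T × Fin (q + 1))
  obtain ⟨V, hV, M, r, p, p', x, hM, hMconn, hp, hsep, hx⟩ :=
    hC.exists_connected_of_family hIso hpt (q := q) (E := 2 ^ (q + 1))
      (Nat.pow_le_pow_right two_pos q.le_succ) (ι := T × Fin (q + 1)) (fun i => hJ i.1)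
      (fun i => hconn i.1) (fun i => hfar i.1) Finset.univ
  refine ⟨V, hV, M, r, hM, hMconn, ⟨p, p', hp⟩, ?_⟩
  intro W _ J' c u' hJ' hconn' hfar'
  let t : T := ⟨localType J' q fun _ => c, W, ‹_›, J', c, u', hJ', hconn', hfar', rfl⟩
  have htwin : LocalWins J' (J t) q {(c, v t)} :=
    (localWins_of_localType_eq (htype t).symm).subset (Set.singleton_subset_iff.2 ⟨0, rfl⟩)
  refine ⟨fun i => x (t, i), fun i j hij => hsep (by simp) (by simp) (by simpa using hij),
    fun i => ?_⟩
  obtain ⟨hxr, hwins⟩ := hx (t, i) (Finset.mem_univ _)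
  exact ⟨hxr, htwin.trans_singleton hwins⟩

theorem IsUniversal.rich {q : ℕ} {M : SimpleGraph V} (hM : IsUniversal C q M r) {W₁ W₂ : Type}
    [Finite W₁] {J₁ : SimpleGraph W₁} {J₂ : SimpleGraph W₂} (hJ₁ : C W₁ J₁) (hconn : J₁.Connected)
    (h₁ : HasPendantCopy M r J₁) (h₂ : HasPendantCopy M r J₂) : Rich J₁ J₂ q ∅ := by
  intro c
  obtain ⟨f₁, hf₁⟩ := h₁
  obtain ⟨f₂, hf₂⟩ := h₂
  obtain ⟨u, hu⟩ : ∃ u, ((2 ^ (q + 1) : ℕ) : ℕ∞) < J₁.edist c u := by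
    obtain ⟨p, p', hp⟩ := hM.exists_le_edist
    by_contra! hnear
    have hpp' : ((2 ^ (q + 1) + 2 ^ (q + 1) : ℕ) : ℕ∞) < J₁.edist (f₁ p) (f₁ p') :=
      (Nat.cast_lt.2 (by omega)).trans_le (hp.trans (hf₁.edist_le p p'))
    exact (lt_edist_of_edist_le hpp' (SimpleGraph.edist_comm.trans_le (hnear (f₁ p)))).not_ge
      (hnear (f₁ p'))
  obtain ⟨d, hd, htwin⟩ := hM.exists_twins hJ₁ hconn hu
  have hle : ((2 ^ q : ℕ) : ℕ∞) ≤ (2 ^ (q + 1) : ℕ) :=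
    Nat.cast_le.2 (Nat.pow_le_pow_right two_pos q.le_succ)
  exact Or.inr ⟨fun i => f₂ (d i), fun i j hij => (hd hij).trans_le (hf₂.edist_le _ _),
    fun i => ⟨fun _ hp => hp.elim,
      (htwin i).2.trans_singleton (hf₂.localWins (hle.trans_lt (htwin i).1))⟩⟩

/-- The rooted graph `(M, r)` decides the sentence `φ` in the class `C`: once the connected part
`J` of a disjoint union `J ⊕g H` has a pendant copy of `(M, r)`, the truth of `φ` depends on `H`
only. -/
def Decides (C : GraphClassOn) (M : SimpleGraph V) (r : V) (φ : Language.graph.Sentence) : Prop :=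
  ∀ {W₁ W₂ U : Type} [Finite W₁] [Finite W₂] {J₁ : SimpleGraph W₁} {J₂ : SimpleGraph W₂}
    (H : SimpleGraph U), C W₁ J₁ → C W₂ J₂ → J₁.Connected → J₂.Connected →
    HasPendantCopy M r J₁ → HasPendantCopy M r J₂ → (SatFO (J₁ ⊕g H) φ ↔ SatFO (J₂ ⊕g H) φ)

theorem ClassAddable.exists_decides (hC : ClassAddable C) (hIso : ClassIsoInvariant C)
    (hpt : C (Fin 1) ⊥) (φ : Language.graph.Sentence) :
    ∃ (V : Type) (_ : Finite V) (M : SimpleGraph V) (r : V),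
      C V M ∧ M.Connected ∧ Decides C M r φ := by
  obtain ⟨V, hV, M, r, hM, hMconn, huniv⟩ := hC.exists_isUniversal hIso hpt (quantifierRank φ)
  refine ⟨V, hV, M, r, hM, hMconn, fun H h₁ h₂ hconn₁ hconn₂ hcopy₁ hcopy₂ => ?_⟩
  exact (duplicatorWins_sum (huniv.rich h₁ hconn₁ hcopy₁ hcopy₂)
    (huniv.rich h₂ hconn₂ hcopy₂ hcopy₁)).satFO_iff

end AddableClass

/-! ### Deleting a component -/

section Away

variable {V A B : Type*}

theorem exists_eq_sum_iff {G : SimpleGraph (A ⊕ B)} :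
    (∃ J H, J.Connected ∧ G = J ⊕g H) ↔ ∃ x, ∀ y, y.isRight ↔ ¬G.Reachable x y := by
  constructor
  · rintro ⟨J, H, hJ, rfl⟩
    obtain ⟨a⟩ := hJ.nonempty
    refine ⟨Sum.inl a, ?_⟩
    rintro (a' | b)
    · simpa using (hJ.preconnected a a').map SimpleGraph.Embedding.sumInl.toHom
    · simpa using SimpleGraph.not_reachable_sum_inl_inr a b
  · rintro ⟨x, hx⟩
    obtain ⟨a, rfl⟩ : ∃ a, Sum.inl a = x := by
      obtain a | b := x
      · exact ⟨a, rfl⟩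
      · exact absurd (SimpleGraph.Reachable.refl _) ((hx (Sum.inr b)).1 rfl)
    have hl : ∀ a', G.Reachable (Sum.inl a) (Sum.inl a') := fun a' => by simpa using hx (Sum.inl a')
    have hr : ∀ a' b, ¬G.Adj (Sum.inl a') (Sum.inr b) := fun a' b h =>
      (hx (Sum.inr b)).1 rfl ((hl a').trans h.reachable)
    have hG : G = G.comap Sum.inl ⊕g G.comap Sum.inr := by
      ext (a' | b) (a'' | b')
      · simp
      · simpa using hr a' b'
      · simpa using fun h => hr a'' b h.symm
      · simp
    refine ⟨_, _, SimpleGraph.connected_iff_exists_forall_reachable _ |>.2 ⟨a, fun a' => ?_⟩, hG⟩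
    obtain ⟨c, hc, hac⟩ := (hasClosedRange_sumInl (H := G.comap Sum.inr)).exists_eq_of_reachable
      (hG ▸ hl a')
    exact Sum.inl_injective hc ▸ hac

variable [Fintype V]

open scoped Classical in
/-- The vertices outside of the connected component of `v`. -/
noncomputable def awayFrom (G : SimpleGraph V) (v : V) : Finset V :=
  {w | ¬G.Reachable v w}

@[simp]
theorem mem_awayFrom {G : SimpleGraph V} {v w : V} : w ∈ awayFrom G v ↔ ¬G.Reachable v w := by
  simp [awayFrom]

theorem awayFrom_eq_of_notMem {G : SimpleGraph V} {u v : V} (hv : v ∉ awayFrom G u) :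
    awayFrom G u = awayFrom G v := by
  rw [mem_awayFrom, not_not] at hv
  ext w
  rw [mem_awayFrom, mem_awayFrom, not_iff_not]
  exact ⟨hv.symm.trans, hv.trans⟩

theorem self_notMem_awayFrom (G : SimpleGraph V) (v : V) : v ∉ awayFrom G v := by
  simp

end Away

section CountBridges

open scoped Finset

variable {V : Type*} [Fintype V]

theorem natCard_adj_le_of_isAcyclic {F : SimpleGraph V} (hF : F.IsAcyclic) :
    Nat.card {p : V × V // F.Adj p.1 p.2} ≤ 2 * (Fintype.card V - 1) := by
  classical
  rcases isEmpty_or_nonempty V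
  · simp
  obtain ⟨T, hFT, -, hT⟩ := SimpleGraph.connected_top.exists_isTree_le_of_le_of_isAcyclic le_top hF
  have hdart : Nat.card {p : V × V // F.Adj p.1 p.2} ≤ Nat.card T.Dart :=
    Nat.card_le_card_of_injective (fun p => ⟨p.1, hFT p.2⟩) fun p q h =>
      Subtype.ext (congrArg SimpleGraph.Dart.toProd h)
  rw [Nat.card_eq_fintype_card (α := T.Dart), T.dart_card_eq_twice_card_edges] at hdart
  have := hT.card_edgeFinset
  omega

theorem natCard_bridges_le (G : SimpleGraph V) :
    Nat.card {p : V × V // G.Adj p.1 p.2 ∧ G.IsBridge s(p.1, p.2)} ≤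
      2 * (Fintype.card V - 1) := by
  let F : SimpleGraph V :=
    { Adj := fun u v => G.Adj u v ∧ G.IsBridge s(u, v)
      symm := ⟨fun u v h => ⟨h.1.symm, Sym2.eq_swap ▸ h.2⟩⟩
      loopless := ⟨fun v h => h.1.ne rfl⟩ }
  refine natCard_adj_le_of_isAcyclic (F := F) ?_
  exact SimpleGraph.isAcyclic_iff_forall_adj_isBridge.2 fun u v h => h.2.anti fun _ _ h => h.1

theorem natCard_not_reachable_le {P Q : SimpleGraph V → Prop}
    (hPQ : ∀ G u v, P G → ¬G.Reachable u v → Q (G ⊔ SimpleGraph.edge u v)) :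
    Nat.card {x : SimpleGraph V × V × V // P x.1 ∧ ¬x.1.Reachable x.2.1 x.2.2} ≤
      2 * (Fintype.card V - 1) * Nat.card {G // Q G} := by
  classical
  let f : {x : SimpleGraph V × V × V // P x.1 ∧ ¬x.1.Reachable x.2.1 x.2.2} →
      {y : {G // Q G} × (V × V) // y.1.1.Adj y.2.1 y.2.2 ∧ y.1.1.IsBridge s(y.2.1, y.2.2)} :=
    fun x => ⟨⟨⟨x.1.1 ⊔ SimpleGraph.edge x.1.2.1 x.1.2.2, hPQ _ _ _ x.2.1 x.2.2⟩, x.1.2⟩,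
      Or.inr (SimpleGraph.edge_adj _ _ _ _ |>.2
        ⟨Or.inl ⟨rfl, rfl⟩, fun h => x.2.2 (h ▸ SimpleGraph.Reachable.refl _)⟩),
      SimpleGraph.isBridge_sup_edge.2 (SimpleGraph.IsBridge.of_not_reachable x.2.2)⟩
  have hsdiff : ∀ {G : SimpleGraph V} {p : V × V}, ¬G.Reachable p.1 p.2 →
      (G ⊔ SimpleGraph.edge p.1 p.2) \ SimpleGraph.edge p.1 p.2 = G := fun h => by
    rw [sup_sdiff_right_self, SimpleGraph.sdiff_edge _ fun h' => h h'.reachable]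
  have hf : Function.Injective f := by
    rintro ⟨⟨G, p⟩, _, hG⟩ ⟨⟨G', p'⟩, _, hG'⟩ h
    simp only [f, Subtype.mk.injEq, Prod.mk.injEq] at h
    obtain ⟨h, rfl⟩ := h
    exact Subtype.ext (Prod.ext (by rw [← hsdiff hG, h, hsdiff hG']) rfl)
  refine (Nat.card_le_card_of_injective f hf).trans ?_
  rw [Nat.card_congr (Equiv.subtypeProdEquivSigmaSubtype fun (G : {G // Q G}) (p : V × V) =>
    G.1.Adj p.1 p.2 ∧ G.1.IsBridge s(p.1, p.2)), Nat.card_sigma, Nat.card_eq_fintype_card,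
    mul_comm, ← smul_eq_mul, ← Finset.card_univ]
  exact Finset.sum_le_card_nsmul _ _ _ fun G _ => natCard_bridges_le G.1

open scoped Classical in
theorem sum_card_awayFrom (P : SimpleGraph V → Prop) :
    ∑ G : {G // P G}, ∑ v, #(awayFrom G.1 v) =
      Nat.card {x : SimpleGraph V × V × V // P x.1 ∧ ¬x.1.Reachable x.2.1 x.2.2} := by
  let e : {x : SimpleGraph V × V × V // P x.1 ∧ ¬x.1.Reachable x.2.1 x.2.2} ≃
      Σ (G : {G // P G}) (v : V), awayFrom G.1 v :=
    { toFun := fun x => ⟨⟨x.1.1, x.2.1⟩, x.1.2.1, x.1.2.2, mem_awayFrom.2 x.2.2⟩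
      invFun := fun y => ⟨⟨y.1.1, y.2.1, y.2.2⟩, y.1.2, mem_awayFrom.1 y.2.2.2⟩ }
  simp only [Nat.card_congr e, Nat.card_eq_fintype_card, Fintype.card_sigma, Fintype.card_coe]

open scoped Classical in
theorem sum_card_awayFrom_le {P Q : SimpleGraph V → Prop}
    (hPQ : ∀ G u v, P G → ¬G.Reachable u v → Q (G ⊔ SimpleGraph.edge u v)) :
    ∑ G : {G // P G}, ∑ v, #(awayFrom G.1 v) ≤
      2 * (Fintype.card V - 1) * Nat.card {G // Q G} :=
  (sum_card_awayFrom P).trans_le (natCard_not_reachable_le hPQ)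

theorem mul_natCard_le_of_lt_card_awayFrom [Nonempty V] {P Q : SimpleGraph V → Prop} (m : ℕ)
    (hP : ∀ G v, P G → m < #(awayFrom G v))
    (hPQ : ∀ G u v, P G → ¬G.Reachable u v → Q (G ⊔ SimpleGraph.edge u v)) :
    (m + 1) * Nat.card {G // P G} ≤ 2 * Nat.card {G // Q G} := by
  classical
  have hlower : Nat.card {G // P G} • (Fintype.card V • (m + 1)) ≤
      ∑ G : {G // P G}, ∑ v, #(awayFrom G.1 v) := by
    rw [Nat.card_eq_fintype_card]
    exact Finset.card_nsmul_le_sum _ _ _ fun G _ =>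
      Finset.card_nsmul_le_sum _ _ _ fun v _ => hP G v G.2
  refine Nat.le_of_mul_le_mul_left ?_ (Fintype.card_pos (α := V))
  calc Fintype.card V * ((m + 1) * Nat.card {G // P G})
      = Nat.card {G // P G} • (Fintype.card V • (m + 1)) := by
        simp only [smul_eq_mul]; ring
    _ ≤ 2 * (Fintype.card V - 1) * Nat.card {G // Q G} := hlower.trans (sum_card_awayFrom_le hPQ)
    _ ≤ 2 * Fintype.card V * Nat.card {G // Q G} := by gcongr; exact Nat.sub_le _ _
    _ = Fintype.card V * (2 * Nat.card {G // Q G}) := by ring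

end CountBridges

/-! ### Counting graphs by the component of a vertex -/

section Split

open scoped Finset

/-- The class of connected graphs of `C`. -/
def ConnectedIn (C : GraphClassOn) : GraphClassOn :=
  fun V _ G => C V G ∧ G.Connected

/-- The class of graphs of `C` with the property `Q`. -/
def ClassInter (C Q : GraphClassOn) : GraphClassOn :=
  fun V _ G => C V G ∧ Q V G

/-- The number of pairs of a connected graph `J` on `Fin i` and a graph `H` on `Fin j` whose
disjoint union belongs to the class. -/
noncomputable def splitCount (D : GraphClassOn) (i j : ℕ) : ℕ :=
  Nat.card {p : SimpleGraph (Fin i) × SimpleGraph (Fin j) //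
    p.1.Connected ∧ D (Fin i ⊕ Fin j) (p.1 ⊕g p.2)}

variable {C D : GraphClassOn} {n : ℕ}

theorem splitCount_eq_natCard (D : GraphClassOn) (i j : ℕ) : splitCount D i j =
    Nat.card {G : SimpleGraph (Fin i ⊕ Fin j) //
      D _ G ∧ ∃ x, ∀ y : Fin i ⊕ Fin j, y.isRight ↔ ¬G.Reachable x y} := by
  refine Nat.card_congr (Equiv.ofBijective (fun p => ⟨p.1.1 ⊕g p.1.2, p.2.2,
    exists_eq_sum_iff.1 ⟨_, _, p.2.1, rfl⟩⟩) ⟨?_, ?_⟩)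
  · rintro ⟨⟨J, H⟩, _⟩ ⟨⟨J', H'⟩, _⟩ h
    have hJH : J ⊕g H = J' ⊕g H' := congrArg Subtype.val h
    refine Subtype.ext (Prod.ext ?_ ?_)
    · exact congrArg (SimpleGraph.comap Sum.inl) hJH
    · exact congrArg (SimpleGraph.comap Sum.inr) hJH
  · rintro ⟨G, hD, hG⟩
    obtain ⟨J, H, hJ, rfl⟩ := exists_eq_sum_iff.2 hG
    exact ⟨⟨(J, H), hJ, hD⟩, rfl⟩

/-- The isomorphism from a graph to its copy under a bijection of the vertices. -/
def isoSimpleGraph {V W : Type*} (e : V ≃ W) (G : SimpleGraph V) : G ≃g e.simpleGraph G :=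
  (SimpleGraph.Iso.comap e.symm G).symm

theorem natCard_mem_range_awayFrom (hD : ClassIsoInvariant D) (T : Finset (Fin n)) :
    Nat.card {G : SimpleGraph (Fin n) // D (Fin n) G ∧ T ∈ Set.range (awayFrom G)} =
      splitCount D #Tᶜ #T := by
  let e : Fin #Tᶜ ⊕ Fin #T ≃ Fin n := finSumEquivOfFinset rfl (by rw [compl_compl])
  have he : ∀ x, e x ∈ T ↔ x.isRight := by
    rintro (x | x)
    · simpa [e] using Finset.mem_compl.1 (Tᶜ.orderEmbOfFin_mem rfl x)
    · simp [e]
  rw [splitCount_eq_natCard]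
  refine (Nat.card_congr (e.simpleGraph.subtypeEquiv fun G => ?_)).symm
  refine and_congr (hD _ _ _ _ ⟨isoSimpleGraph e G⟩) ?_
  have hreach : ∀ x y, (e.simpleGraph G).Reachable (e x) (e y) ↔ G.Reachable x y := fun x y =>
    (isoSimpleGraph e G).reachable_iff
  simp only [Set.mem_range, e.surjective.exists, Finset.ext_iff, e.surjective.forall, mem_awayFrom,
    he, hreach, Iff.comm]

open scoped Classical in
theorem card_awayFrom_eq {V : Type*} [Fintype V] [DecidableEq V] (G : SimpleGraph V)
    (T : Finset V) :
    #{v | awayFrom G v = T} = if T ∈ Set.range (awayFrom G) then #Tᶜ else 0 := by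
  split_ifs with hT
  · obtain ⟨u, rfl⟩ := hT
    congr 1
    ext v
    rw [Finset.mem_filter_univ, Finset.mem_compl]
    exact ⟨fun h => h ▸ self_notMem_awayFrom G v, fun hv => (awayFrom_eq_of_notMem hv).symm⟩
  · exact Finset.card_eq_zero.2 (Finset.filter_false_of_mem fun v _ hv => hT ⟨v, hv⟩)

open scoped Classical in
theorem sum_splitCount (hD : ClassIsoInvariant D) (n : ℕ) (g : ℕ → ℕ) :
    ∑ T : Finset (Fin n), #Tᶜ * g #T * splitCount D #Tᶜ #T =
      ∑ G : {G : SimpleGraph (Fin n) // D (Fin n) G}, ∑ v, g #(awayFrom G.1 v) := by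
  have hcount : ∀ T : Finset (Fin n), ∑ G : {G : SimpleGraph (Fin n) // D (Fin n) G},
      #{v | awayFrom G.1 v = T} = #Tᶜ * splitCount D #Tᶜ #T := by
    intro T
    simp only [card_awayFrom_eq]
    rw [← Finset.sum_filter, Finset.sum_const, ← natCard_mem_range_awayFrom hD,
      ← Fintype.card_subtype, ← Nat.card_eq_fintype_card, smul_eq_mul, mul_comm]
    exact congrArg _ (Nat.card_congr
      (Equiv.subtypeSubtypeEquivSubtypeInter _ fun G => T ∈ Set.range (awayFrom G)))
  calc ∑ T : Finset (Fin n), #Tᶜ * g #T * splitCount D #Tᶜ #T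
      = ∑ T : Finset (Fin n), ∑ G : {G : SimpleGraph (Fin n) // D (Fin n) G},
          #{v | awayFrom G.1 v = T} * g #T := by
        refine Finset.sum_congr rfl fun T _ => ?_
        rw [mul_right_comm, ← hcount, Finset.sum_mul]
    _ = ∑ G : {G : SimpleGraph (Fin n) // D (Fin n) G}, ∑ T : Finset (Fin n),
          ∑ v with awayFrom G.1 v = T, g #(awayFrom G.1 v) := by
        rw [Finset.sum_comm]
        refine Finset.sum_congr rfl fun G _ => Finset.sum_congr rfl fun T _ => ?_
        rw [Finset.sum_congr rfl fun v hv => by rw [(Finset.mem_filter.1 hv).2],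
          Finset.sum_const, smul_eq_mul]
    _ = _ := Finset.sum_congr rfl fun G _ => Finset.sum_fiberwise _ _ _

theorem mul_classCount (hD : ClassIsoInvariant D) (n : ℕ) :
    n * classCount D n = ∑ T : Finset (Fin n), #Tᶜ * splitCount D #Tᶜ #T := by
  classical
  have h := sum_splitCount hD n fun _ => 1
  simp only [mul_one, Finset.sum_const, Finset.card_univ, Fintype.card_fin, smul_eq_mul] at h
  rw [h, classCount, Nat.card_eq_fintype_card, mul_comm]

theorem classCount_small_awayFrom (hD : ClassIsoInvariant D) {m : ℕ} (hm : 2 * m < n) :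
    Nat.card {G : SimpleGraph (Fin n) // D (Fin n) G ∧ ∃ v, #(awayFrom G v) ≤ m} =
      ∑ T : Finset (Fin n) with #T ≤ m, splitCount D #Tᶜ #T := by
  classical
  have hunique : ∀ (G : SimpleGraph (Fin n)) u v, #(awayFrom G u) ≤ m → #(awayFrom G v) ≤ m →
      awayFrom G u = awayFrom G v := by
    intro G u v hu hv
    obtain ⟨w, hw⟩ : ∃ w, w ∉ awayFrom G u ∪ awayFrom G v := by
      by_contra! h
      have := Finset.card_le_card (fun w _ => h w : Finset.univ ⊆ awayFrom G u ∪ awayFrom G v)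
      have := Finset.card_union_le (awayFrom G u) (awayFrom G v)
      rw [Finset.card_univ, Fintype.card_fin] at *
      omega
    rw [Finset.notMem_union] at hw
    rw [awayFrom_eq_of_notMem hw.1, awayFrom_eq_of_notMem hw.2]
  have hbiUnion : ({G | D (Fin n) G ∧ ∃ v, #(awayFrom G v) ≤ m} : Finset (SimpleGraph (Fin n))) =
      Finset.biUnion {T | #T ≤ m} fun T => {G | D (Fin n) G ∧ T ∈ Set.range (awayFrom G)} := by
    ext G
    simp [and_left_comm]
  have hdisjoint : Set.PairwiseDisjoint ({T | #T ≤ m} : Finset (Finset (Fin n)))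
      fun T => ({G | D (Fin n) G ∧ T ∈ Set.range (awayFrom G)} :
        Finset (SimpleGraph (Fin n))) := by
    intro S hS T hT hne
    refine Finset.disjoint_left.2 fun G hGS hGT => hne ?_
    obtain ⟨-, u, rfl⟩ := (Finset.mem_filter.1 hGS).2
    obtain ⟨-, v, rfl⟩ := (Finset.mem_filter.1 hGT).2
    exact hunique G u v (Finset.mem_filter.1 hS).2 (Finset.mem_filter.1 hT).2
  rw [Nat.card_eq_fintype_card, Fintype.card_subtype, hbiUnion, Finset.card_biUnion hdisjoint]
  refine Finset.sum_congr rfl fun T _ => ?_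
  rw [← natCard_mem_range_awayFrom hD, Nat.card_eq_fintype_card, Fintype.card_subtype]

theorem ClassIsoInvariant.inter (hC : ClassIsoInvariant C) (hD : ClassIsoInvariant D) :
    ClassIsoInvariant (ClassInter C D) :=
  fun V W _ _ G H h => and_congr (hC V W G H h) (hD V W G H h)

theorem ClassDecomposable.splitCount_eq (hC : ClassDecomposable C) (hIso : ClassIsoInvariant C)
    (i j : ℕ) : splitCount C i j = classCount (ConnectedIn C) i * classCount C j := by
  rw [splitCount, classCount, classCount, ← Nat.card_prod]
  refine Nat.card_congr ((Equiv.subtypeEquivRight fun p => ?_).trans Equiv.subtypeProdEquivProd)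
  exact (and_congr_right' (hC.sum_iff hIso)).trans (and_left_comm.trans and_assoc.symm)

/-- The class of graphs with at most two connected components. -/
def AtMostTwoComponents : GraphClassOn :=
  fun V _ G => ∀ u v w : V, G.Reachable u v ∨ G.Reachable u w ∨ G.Reachable v w

theorem classIsoInvariant_atMostTwoComponents : ClassIsoInvariant AtMostTwoComponents := by
  rintro V W _ _ G H ⟨e⟩
  refine ⟨fun h => ?_, fun h u v w => ?_⟩
  · simp only [AtMostTwoComponents, e.surjective.forall, SimpleGraph.Iso.reachable_iff]
    exact h
  · simpa only [SimpleGraph.Iso.reachable_iff] using h (e u) (e v) (e w)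

theorem connected_sup_edge_of_atMostTwoComponents {V : Type} [Finite V] {G : SimpleGraph V}
    {u v : V} (hG : AtMostTwoComponents V G) (huv : ¬G.Reachable u v) :
    (G ⊔ SimpleGraph.edge u v).Connected := by
  have hadj : (G ⊔ SimpleGraph.edge u v).Adj u v :=
    Or.inr (SimpleGraph.edge_adj _ _ _ _ |>.2
      ⟨Or.inl ⟨rfl, rfl⟩, fun h => huv (h ▸ SimpleGraph.Reachable.refl _)⟩)
  refine SimpleGraph.connected_iff_exists_forall_reachable _ |>.2 ⟨u, fun w => ?_⟩
  rcases (hG u v w).resolve_left huv with h | h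
  · exact h.mono le_sup_left
  · exact hadj.reachable.trans (h.mono le_sup_left)

theorem ClassAddable.mul_le_splitCount (hC : ClassAddable C) (hIso : ClassIsoInvariant C)
    (i j : ℕ) : classCount (ConnectedIn C) i * classCount (ConnectedIn C) j ≤
      splitCount (ClassInter C AtMostTwoComponents) i j := by
  rw [splitCount, classCount, classCount, ← Nat.card_prod]
  refine Nat.card_le_card_of_injective (fun p => ⟨(p.1.1, p.2.1), p.1.2.2,
    (hC.1.sum_iff hIso).2 ⟨p.1.2.1, p.2.2.1⟩, ?_⟩) ?_
  · have hl := fun a a' =>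
      (p.1.2.2.preconnected a a').map (SimpleGraph.Embedding.sumInl (H := p.2.1)).toHom
    have hr := fun b b' =>
      (p.2.2.2.preconnected b b').map (SimpleGraph.Embedding.sumInr (G := p.1.1)).toHom
    rintro (u | u) (v | v) (w | w) <;> simp_all
  · rintro ⟨⟨J, _⟩, ⟨H, _⟩⟩ ⟨⟨J', _⟩, ⟨H', _⟩⟩ h
    simpa using h

theorem ClassAddable.sum_mul_mul_classCount_connectedIn_le (hC : ClassAddable C)
    (hIso : ClassIsoInvariant C) (n : ℕ) :
    ∑ T : Finset (Fin n), (#Tᶜ * classCount (ConnectedIn C) #Tᶜ) *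
      (#T * classCount (ConnectedIn C) #T) ≤ 2 * (n - 1) * classCount (ConnectedIn C) n := by
  classical
  calc _ = ∑ T : Finset (Fin n), #Tᶜ * #T *
          (classCount (ConnectedIn C) #Tᶜ * classCount (ConnectedIn C) #T) :=
        Finset.sum_congr rfl fun T _ => by ring
    _ ≤ ∑ T : Finset (Fin n), #Tᶜ * #T *
          splitCount (ClassInter C AtMostTwoComponents) #Tᶜ #T := by
        gcongr with T
        exact hC.mul_le_splitCount hIso _ _
    _ ≤ 2 * (n - 1) * classCount (ConnectedIn C) n := by
        have hsum := sum_card_awayFrom_le (P := ClassInter C AtMostTwoComponents (Fin n))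
          (Q := ConnectedIn C (Fin n)) fun G u v hG huv =>
            ⟨hC.2 _ _ _ _ hG.1 huv, connected_sup_edge_of_atMostTwoComponents hG.2 huv⟩
        rw [Fintype.card_fin] at hsum
        have hsplit := sum_splitCount (hIso.inter classIsoInvariant_atMostTwoComponents) n id
        simp only [id_eq] at hsplit
        rw [hsplit, classCount]
        convert hsum

end Split

section ExponentialGeneratingFunction

open scoped Finset Nat
open Finset.HasAntidiagonal (antidiagonal)

variable {C D : GraphClassOn}

/-- The coefficients of the exponential generating function of the class. -/
noncomputable def egfCoeff (D : GraphClassOn) (n : ℕ) : ℝ :=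
  classCount D n / n !

/-- The coefficients of the bivariate exponential generating function of `splitCount`. -/
noncomputable def splitCoeff (D : GraphClassOn) (i j : ℕ) : ℝ :=
  splitCount D i j / (i ! * j !)

theorem sum_finset_card_div_factorial (f : ℕ → ℕ → ℝ) (n : ℕ) :
    (∑ T : Finset (Fin n), f #Tᶜ #T) / n ! =
      ∑ p ∈ antidiagonal n, f p.1 p.2 / (p.1 ! * p.2 !) := by
  have hcompl : ∀ T : Finset (Fin n), #Tᶜ = n - #T := fun T => by
    rw [Finset.card_compl, Fintype.card_fin]
  simp only [hcompl]
  rw [← Finset.powerset_univ, Finset.sum_powerset_apply_card fun h => f (n - h) h,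
    Finset.card_univ, Fintype.card_fin, ← Finset.Nat.sum_antidiagonal_swap,
    Finset.Nat.sum_antidiagonal_eq_sum_range_succ_mk, Finset.sum_div]
  refine Finset.sum_congr rfl fun h hh => ?_
  rw [nsmul_eq_mul, Nat.cast_choose ℝ (Finset.mem_range_succ_iff.1 hh), Prod.swap_prod_mk]
  field_simp

theorem natCast_mul_egfCoeff (hD : ClassIsoInvariant D) (n : ℕ) :
    n * egfCoeff D n = ∑ p ∈ antidiagonal n, p.1 * splitCoeff D p.1 p.2 := by
  have h := sum_finset_card_div_factorial (fun i j => i * splitCount D i j) n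
  simp only [splitCoeff, egfCoeff, ← mul_div_assoc]
  rw [← h]
  exact_mod_cast congrArg (fun k : ℕ => (k : ℝ) / n !) (mul_classCount hD n)

theorem ClassAddable.sum_mul_mul_egfCoeff_connectedIn_le (hC : ClassAddable C)
    (hIso : ClassIsoInvariant C) {n : ℕ} (hn : n ≠ 0) :
    ∑ p ∈ antidiagonal n, (p.1 * egfCoeff (ConnectedIn C) p.1) *
      (p.2 * egfCoeff (ConnectedIn C) p.2) ≤ 2 * (n - 1) * egfCoeff (ConnectedIn C) n := by
  have hcount := hC.sum_mul_mul_classCount_connectedIn_le hIso n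
  rify [Nat.one_le_iff_ne_zero.2 hn] at hcount
  calc _ = (∑ T : Finset (Fin n), (#Tᶜ * classCount (ConnectedIn C) #Tᶜ : ℝ) *
          (#T * classCount (ConnectedIn C) #T)) / n ! := by
        rw [sum_finset_card_div_factorial fun i j => (i * classCount (ConnectedIn C) i : ℝ) *
          (j * classCount (ConnectedIn C) j)]
        exact Finset.sum_congr rfl fun p _ => by simp only [egfCoeff]; field_simp
    _ ≤ 2 * (n - 1) * classCount (ConnectedIn C) n / n ! := by gcongr
    _ = 2 * (n - 1) * egfCoeff (ConnectedIn C) n := mul_div_assoc _ _ _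

theorem ClassDecomposable.splitCoeff_eq (hC : ClassDecomposable C) (hIso : ClassIsoInvariant C)
    (i j : ℕ) : splitCoeff C i j = egfCoeff (ConnectedIn C) i * egfCoeff C j := by
  rw [splitCoeff, hC.splitCount_eq hIso, egfCoeff, egfCoeff, div_mul_div_comm, Nat.cast_mul]

theorem natCard_and_add_natCard_and_not {α : Type*} [Finite α] (p q : α → Prop) :
    Nat.card {x // p x ∧ q x} + Nat.card {x // p x ∧ ¬q x} = Nat.card {x // p x} :=
  Set.ncard_inter_add_ncard_sdiff_eq_ncard {x | p x} {x | q x} (Set.toFinite _)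

theorem egfCoeff_small_awayFrom (hD : ClassIsoInvariant D) {n m : ℕ} (hm : 2 * m < n) :
    (Nat.card {G : SimpleGraph (Fin n) // D (Fin n) G ∧ ∃ v, #(awayFrom G v) ≤ m} : ℝ) / n ! =
      ∑ h ∈ Finset.range (m + 1), splitCoeff D (n - h) h := by
  rw [classCount_small_awayFrom hD hm, Finset.sum_filter]
  push_cast
  rw [sum_finset_card_div_factorial fun i j => if j ≤ m then (splitCount D i j : ℝ) else 0,
    ← Finset.Nat.sum_antidiagonal_swap, Finset.Nat.sum_antidiagonal_eq_sum_range_succ_mk]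
  simp only [Prod.swap_prod_mk, ite_div, zero_div]
  rw [← Finset.sum_filter]
  refine Finset.sum_congr ?_ fun h _ => rfl
  ext h
  simp only [Finset.mem_filter, Finset.mem_range]
  omega

theorem ClassAddable.abs_egfCoeff_sub_sum_splitCoeff_le (hC : ClassAddable C)
    (hD : ClassIsoInvariant (ClassInter C D)) {n m : ℕ} (hm : 2 * m < n) :
    |egfCoeff (ClassInter C D) n -
      ∑ h ∈ Finset.range (m + 1), splitCoeff (ClassInter C D) (n - h) h| ≤
        2 / (m + 1) * egfCoeff C n := by
  set small := Nat.card
    {G : SimpleGraph (Fin n) // ClassInter C D (Fin n) G ∧ ∃ v, #(awayFrom G v) ≤ m} with hsmall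
  set large := Nat.card
    {G : SimpleGraph (Fin n) // ClassInter C D (Fin n) G ∧ ¬∃ v, #(awayFrom G v) ≤ m}
  have hcount : classCount (ClassInter C D) n = small + large :=
    (natCard_and_add_natCard_and_not _ _).symm
  have hlarge : (m + 1) * large ≤ 2 * classCount C n := by
    have : Nonempty (Fin n) := ⟨⟨0, by omega⟩⟩
    refine mul_natCard_le_of_lt_card_awayFrom m (fun G v hG => ?_) fun G u v hG huv =>
      hC.2 _ _ _ _ hG.1.1 huv
    exact lt_of_not_ge fun h => hG.2 ⟨v, h⟩
  rw [← egfCoeff_small_awayFrom hD hm, ← hsmall, egfCoeff, hcount, Nat.cast_add, add_div,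
    add_sub_cancel_left, abs_of_nonneg (by positivity), egfCoeff, ← mul_div_assoc]
  gcongr
  rw [div_mul_eq_mul_div, le_div_iff₀ (by positivity), mul_comm]
  exact_mod_cast hlarge

theorem egfCoeff_nonneg (D : GraphClassOn) (n : ℕ) : 0 ≤ egfCoeff D n := by
  unfold egfCoeff
  positivity

theorem egfCoeff_inter_le (C D : GraphClassOn) (n : ℕ) :
    egfCoeff (ClassInter C D) n ≤ egfCoeff C n := by
  unfold egfCoeff classCount
  gcongr
  exact Nat.card_le_card_of_injective (Subtype.map id fun _ h => h.1)
    (Subtype.map_injective _ Function.injective_id)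

theorem ClassDecomposable.egfCoeff_zero (hC : ClassDecomposable C) : egfCoeff C 0 = 1 := by
  have : Unique {G : SimpleGraph (Fin 0) // C (Fin 0) G} :=
    { default := ⟨⊥, (hC _ _).2 fun c => c.ind fun v => v.elim0⟩
      uniq := fun G => Subtype.ext (Subsingleton.elim _ _) }
  simp [egfCoeff, classCount]

theorem egfCoeff_connectedIn_zero (C : GraphClassOn) : egfCoeff (ConnectedIn C) 0 = 0 := by
  have : IsEmpty {G : SimpleGraph (Fin 0) // ConnectedIn C (Fin 0) G} :=
    ⟨fun G => G.2.2.nonempty.elim fun v => v.elim0⟩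
  simp [egfCoeff, classCount]

theorem egfCoeff_connectedIn_one (hC : C (Fin 1) ⊥) : egfCoeff (ConnectedIn C) 1 = 1 := by
  have : Unique {G : SimpleGraph (Fin 1) // ConnectedIn C (Fin 1) G} :=
    { default := ⟨⊥, hC, SimpleGraph.Connected.of_subsingleton⟩
      uniq := fun G => Subtype.ext (Subsingleton.elim _ _) }
  simp [egfCoeff, classCount]

theorem ClassAddable.egfCoeff_connectedIn_le_two_mul_succ (hC : ClassAddable C)
    (hIso : ClassIsoInvariant C) (hpt : C (Fin 1) ⊥) {n : ℕ} (hn : n ≠ 0) :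
    egfCoeff (ConnectedIn C) n ≤ 2 * egfCoeff (ConnectedIn C) (n + 1) := by
  have hnonneg : ∀ p : ℕ × ℕ, 0 ≤ (p.1 * egfCoeff (ConnectedIn C) p.1) *
      (p.2 * egfCoeff (ConnectedIn C) p.2) := fun p => by
    unfold egfCoeff
    positivity
  have hterm := (Finset.single_le_sum (fun p _ => hnonneg p)
    (Finset.HasAntidiagonal.mem_antidiagonal.2 rfl : (n, 1) ∈ antidiagonal (n + 1))).trans
      (hC.sum_mul_mul_egfCoeff_connectedIn_le hIso n.succ_ne_zero)
  rw [egfCoeff_connectedIn_one hpt] at hterm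
  have hn' : (0 : ℝ) < n := by positivity
  refine le_of_mul_le_mul_left ?_ hn'
  push_cast at hterm
  linarith

end ExponentialGeneratingFunction

/-! ### Connected graphs without pendant copies -/

section LastCopy

variable {A V W : Type*} {M : SimpleGraph A} {r : A} {G : SimpleGraph V} {f : M ↪g G} {v : V}

/-- The embedded copy of `M` is attached to the rest of `G` by a single edge, which joins the image
of the root `r` to `v`. -/
def HangsAt (f : M ↪g G) (r : A) (v : V) : Prop :=
  v ∉ Set.range f ∧ ∀ x, ∀ b ∉ Set.range f, G.Adj (f x) b ↔ x = r ∧ b = v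

theorem HangsAt.pendant (hf : HangsAt f r v) : Pendant f r :=
  fun x b hb h => ((hf.2 x b hb).1 h).1

theorem HangsAt.mem_range_of_crossing (hf : HangsAt f r v) {H : SimpleGraph W} {g : H ↪g G}
    (hH : H.Connected) {x y : W} (hx : g x ∈ Set.range f) (hy : g y ∉ Set.range f) :
    f r ∈ Set.range g ∧ v ∈ Set.range g := by
  obtain ⟨p⟩ := hH.preconnected x y
  obtain ⟨d, -, ⟨z, hz⟩, hd⟩ := p.exists_boundary_dart (g ⁻¹' Set.range f) hx hy
  obtain ⟨rfl, rfl⟩ := (hf.2 z _ hd).1 (hz ▸ g.map_adj_iff.2 d.adj)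
  exact ⟨⟨d.fst, hz.symm⟩, d.snd, rfl⟩

theorem HangsAt.range_subset {f' : M ↪g G} (hM : M.Connected) (hf : HangsAt f r v)
    (hf' : HangsAt f' r v) (hr : f r = f' r) : Set.range f ⊆ Set.range f' := by
  rintro _ ⟨y, rfl⟩
  by_contra hy
  exact hf.1 (hf'.mem_range_of_crossing hM ⟨r, hr.symm⟩ hy).2

theorem HangsAt.eq_or_mem_range [Finite A] {f' : M ↪g G} {v' : V} (hM : M.Connected)
    (hf : HangsAt f r v) (hf' : HangsAt f' r v')
    (hmeet : (Set.range f ∩ Set.range f').Nonempty) :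
    (f r, v) = (f' r, v') ∨ f r ∈ Set.range f' ∧ v ∈ Set.range f' := by
  by_cases hr : f r ∈ Set.range f'
  · by_cases hv : v ∈ Set.range f'
    · exact Or.inr ⟨hr, hv⟩
    · obtain ⟨z, hz⟩ := hr
      obtain ⟨rfl, rfl⟩ := (hf'.2 z v hv).1 (hz ▸ (hf.2 r v hf.1).2 ⟨rfl, rfl⟩)
      exact Or.inl (Prod.ext hz.symm rfl)
  · obtain ⟨_, ⟨x, rfl⟩, hx⟩ := hmeet
    have hr' := (hf'.mem_range_of_crossing hM hx hr).1
    have hsub : Set.range f' ⊆ Set.range f := by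
      rintro _ ⟨y, rfl⟩
      by_contra hy
      exact hr (hf.mem_range_of_crossing hM hr' hy).1
    have heq := Set.eq_of_subset_of_ncard_le hsub (by
      rw [← Set.image_univ, ← Set.image_univ, Set.ncard_image_of_injective _ f.injective,
        Set.ncard_image_of_injective _ f'.injective])
    exact absurd (heq ▸ ⟨r, rfl⟩) hr

/-- `S` carries a copy of `(M, r)` hanging from `G` by a single edge, and its removal leaves no
pendant copy of `(M, r)`. -/
def IsLastCopy (M : SimpleGraph A) (r : A) (G : SimpleGraph V) (S : Set V) : Prop :=
  ∃ (f : M ↪g G) (v : V), Set.range f = S ∧ HangsAt f r v ∧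
    ∃ (W : Type) (H : SimpleGraph W) (g : H ↪g G), Set.range g = Sᶜ ∧ ¬HasPendantCopy M r H

theorem HasPendantCopy.of_range_subset {H : SimpleGraph W} {g : H ↪g G} (hf : Pendant f r)
    (hfg : Set.range f ⊆ Set.range g) : HasPendantCopy M r H := by
  choose φ hφ using fun x => hfg ⟨x, rfl⟩
  refine ⟨⟨⟨φ, fun x y h => f.injective (by rw [← hφ x, ← hφ y, h])⟩, ?_⟩, ?_⟩
  · intro x y
    rw [← f.map_adj_iff, ← hφ, ← hφ, g.map_adj_iff]
    rfl
  · intro x b hb h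
    refine hf x (g b) ?_ (hφ x ▸ g.map_adj_iff.2 h)
    rintro ⟨y, hy⟩
    exact hb ⟨y, g.injective ((hφ y).trans hy)⟩

-- A second last copy must meet the first one, as it would survive the removal of the first; then
-- its bridge lies within the first copy, and this bridge determines it.
theorem natCard_isLastCopy_le [Finite A] (hM : M.Connected) (r : A)
    (G : SimpleGraph V) : Nat.card {S // IsLastCopy M r G S} ≤ Nat.card A ^ 2 + 1 := by
  rcases isEmpty_or_nonempty {S // IsLastCopy M r G S} with
    h | ⟨⟨_, f₀, v₀, rfl, hf₀, W, H, g, hg, hH⟩⟩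
  · simp
  have hcopy : ∀ S : {S // IsLastCopy M r G S}, ∃ (f : M ↪g G) (v : V),
      Set.range f = S ∧ HangsAt f r v := fun ⟨_, f, v, hS, hf, _⟩ => ⟨f, v, hS, hf⟩
  choose f v hrange hf using hcopy
  let bridge : {S // IsLastCopy M r G S} → V × V := fun S => (f S r, v S)
  have hinj : Function.Injective bridge := by
    intro S S' h
    have hr : f S r = f S' r := congrArg Prod.fst h
    have hv : v S = v S' := congrArg Prod.snd h
    refine Subtype.ext ?_
    rw [← hrange S, ← hrange S']
    exact ((hf S).range_subset hM (hv ▸ hf S') hr).antisymm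
      ((hf S').range_subset hM (hv ▸ hf S) hr.symm)
  have hmem : ∀ S, bridge S ∈ insert (f₀ r, v₀) (Set.range f₀ ×ˢ Set.range f₀) := by
    intro S
    refine (hf S).eq_or_mem_range hM hf₀ ?_
    by_contra hmeet
    refine hH (HasPendantCopy.of_range_subset (g := g) (hf S).pendant ?_)
    rw [hg]
    exact Set.subset_compl_iff_disjoint_right.2
      (Set.disjoint_iff_inter_eq_empty.2 (Set.not_nonempty_iff_eq_empty.1 hmeet))
  calc Nat.card {S // IsLastCopy M r G S}
      ≤ (insert (f₀ r, v₀) (Set.range f₀ ×ˢ Set.range f₀)).ncard :=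
        Nat.card_le_card_of_injective (fun S => ⟨bridge S, hmem S⟩) fun _ _ h =>
          hinj (congrArg Subtype.val h)
    _ ≤ Nat.card A ^ 2 + 1 := by
        refine (Set.ncard_insert_le _ _).trans_eq ?_
        rw [Set.ncard_prod, ← Set.image_univ, Set.ncard_image_of_injective _ f₀.injective,
          Set.ncard_univ, sq]

end LastCopy

section Avoiding

open scoped Finset Nat

/-- The connected graphs of `C` without a pendant copy of `(M, r)`. -/
def Avoiding {A : Type*} (C : GraphClassOn) (M : SimpleGraph A) (r : A) : GraphClassOn :=
  ClassInter (ConnectedIn C) fun _ _ G => ¬HasPendantCopy M r G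

variable {A : Type} {C : GraphClassOn} {M : SimpleGraph A} {r : A}

theorem bridgeJoin_injective {V W : Type*} (G : SimpleGraph V) (r : V) :
    Function.Injective fun p : SimpleGraph W × W => bridgeJoin G r p.1 p.2 := by
  rintro ⟨H, u⟩ ⟨H', u'⟩ h
  simp only at h
  have hu : (bridgeJoin G r H' u').Adj (Sum.inl r) (Sum.inr u) :=
    h ▸ bridgeJoin_adj_inl_inr.2 ⟨rfl, rfl⟩
  refine Prod.ext ?_ (bridgeJoin_adj_inl_inr.1 hu).2
  ext a b
  rw [← bridgeJoin_adj_inr_inr (G := G) (r := r), h, bridgeJoin_adj_inr_inr]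

theorem isLastCopy_of_iso {V : Type*} {W : Type} {G : SimpleGraph V} {H : SimpleGraph W} {u : W}
    (e : bridgeJoin M r H u ≃g G) (hH : ¬HasPendantCopy M r H) :
    IsLastCopy M r G (Set.range (e ∘ Sum.inl)) := by
  refine ⟨(bridgeJoinInl M r H u).trans e.toEmbedding, e (Sum.inr u), rfl, ⟨?_, ?_⟩, W, H,
    (bridgeJoinInr M r H u).trans e.toEmbedding, ?_, hH⟩
  · rintro ⟨x, hx⟩
    exact Sum.inl_ne_inr (e.injective hx)
  · intro x b hb
    obtain ⟨b | b, rfl⟩ := e.surjective b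
    · exact absurd ⟨b, rfl⟩ hb
    · refine e.map_adj_iff.trans (bridgeJoin_adj_inl_inr.trans (and_congr_right' ?_))
      rw [e.injective.eq_iff, Sum.inr.injEq]
  · change Set.range (e ∘ Sum.inr) = _
    rw [Set.range_comp, Set.range_comp, ← Set.image_compl_eq e.bijective, Set.compl_range_inl]

theorem exists_sumEquiv_range_inl [Finite A] {n : ℕ} {T : Finset (Fin (Nat.card A + n))}
    (hT : #T = Nat.card A) :
    ∃ e : A ⊕ Fin n ≃ Fin (Nat.card A + n), Set.range (e ∘ Sum.inl) = T := by
  have hcompl : #Tᶜ = n := by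
    rw [Finset.card_compl, Fintype.card_fin, hT, Nat.add_sub_cancel_left]
  refine ⟨((Finite.equivFin A).sumCongr (Equiv.refl _)).trans (finSumEquivOfFinset hT hcompl), ?_⟩
  change Set.range (T.orderEmbOfFin hT ∘ Finite.equivFin A) = _
  rw [(Finite.equivFin A).surjective.range_comp, Finset.range_orderEmbOfFin]

theorem ClassAddable.choose_mul_classCount_avoiding_le [Finite A] (hC : ClassAddable C)
    (hIso : ClassIsoInvariant C) (hM : C A M) (hMc : M.Connected) (r : A) (n : ℕ) :
    (Nat.card A + n).choose (Nat.card A) * (n * classCount (Avoiding C M r) n) ≤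
      (Nat.card A ^ 2 + 1) * classCount (ConnectedIn C) (Nat.card A + n) := by
  classical
  set N := Nat.card A + n
  choose e he using fun T : {T : Finset (Fin N) // #T = Nat.card A} =>
    exists_sumEquiv_range_inl T.2
  let attach : {T : Finset (Fin N) // #T = Nat.card A} ×
        (Fin n × {G : SimpleGraph (Fin n) // Avoiding C M r (Fin n) G}) →
      {p : {G : SimpleGraph (Fin N) // ConnectedIn C (Fin N) G} × Set (Fin N) //
        IsLastCopy M r p.1.1 p.2} :=
    fun x =>
      let i := isoSimpleGraph (e x.1) (bridgeJoin M r x.2.2.1 x.2.1)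
      ⟨⟨⟨_, (hIso _ _ _ _ ⟨i⟩).1 (hC.bridgeJoin_mem hIso hM x.2.2.2.1.1),
        i.connected_iff.1 (bridgeJoin_connected hMc x.2.2.2.1.2)⟩,
        Set.range (i ∘ Sum.inl)⟩, isLastCopy_of_iso i x.2.2.2.2⟩
  have hattach : Function.Injective attach := by
    rintro ⟨T, u, G, _⟩ ⟨T', u', G', _⟩ h
    simp only [attach, Subtype.mk.injEq, Prod.mk.injEq] at h
    obtain rfl : T = T' :=
      Subtype.ext (Finset.coe_injective ((he T).symm.trans (h.2.trans (he T'))))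
    obtain ⟨rfl, rfl⟩ := Prod.mk_inj.1 (bridgeJoin_injective M r (a₁ := (G, u)) (a₂ := (G', u'))
      ((e T).simpleGraph.injective (congrArg Subtype.val h.1)))
    rfl
  calc _ = Nat.card ({T : Finset (Fin N) // #T = Nat.card A} ×
        (Fin n × {G : SimpleGraph (Fin n) // Avoiding C M r (Fin n) G})) := by
        rw [Nat.card_prod, Nat.card_prod, Nat.card_fin,
          Nat.card_eq_fintype_card (α := {T : Finset (Fin N) // _}), Fintype.card_finset_len,
          Fintype.card_fin]
        rfl
    _ ≤ _ := Nat.card_le_card_of_injective _ hattach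
    _ ≤ (Nat.card A ^ 2 + 1) * classCount (ConnectedIn C) N := by
        rw [Nat.card_congr (Equiv.subtypeProdEquivSigmaSubtype fun (G : {G // _}) S =>
          IsLastCopy M r G.1 S), Nat.card_sigma, mul_comm, classCount, Nat.card_eq_fintype_card,
          ← Finset.card_univ, ← smul_eq_mul]
        exact Finset.sum_le_card_nsmul _ _ _ fun G _ => natCard_isLastCopy_le hMc r G.1

theorem ClassAddable.mul_egfCoeff_avoiding_le [Finite A] (hC : ClassAddable C)
    (hIso : ClassIsoInvariant C) (hM : C A M) (hMc : M.Connected) (r : A) (n : ℕ) :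
    n * egfCoeff (Avoiding C M r) n ≤ (Nat.card A)! * (Nat.card A ^ 2 + 1) *
      egfCoeff (ConnectedIn C) (Nat.card A + n) := by
  have hcount := hC.choose_mul_classCount_avoiding_le hIso hM hMc r n
  rify at hcount
  rw [Nat.cast_add_choose] at hcount
  unfold egfCoeff
  field_simp at hcount ⊢
  linarith

end Avoiding

/-! ### Sequences and power series -/

section Sequences

theorem tendsto_div_shift {a : ℕ → ℝ} {γ : ℝ} (ha : ∀ n, a n ≠ 0)
    (hratio : Tendsto (fun n => a (n + 1) / a n) atTop (𝓝 γ)) (h : ℕ) :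
    Tendsto (fun n => a (n + h) / a n) atTop (𝓝 (γ ^ h)) := by
  induction h with
  | zero => simp [ha]
  | succ h ih =>
    rw [pow_succ']
    refine ((hratio.comp (tendsto_add_atTop_nat h)).mul ih).congr fun n => ?_
    simp only [Function.comp_apply]
    rw [div_mul_div_cancel₀ (ha _), Nat.add_assoc]

theorem tendsto_sub_div {a : ℕ → ℝ} {γ : ℝ} (ha : ∀ n, a n ≠ 0) (hγ : γ ≠ 0)
    (hratio : Tendsto (fun n => a (n + 1) / a n) atTop (𝓝 γ)) (h : ℕ) :
    Tendsto (fun n => a (n - h) / a n) atTop (𝓝 (γ⁻¹ ^ h)) := by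
  rw [← tendsto_add_atTop_iff_nat h, inv_pow]
  refine ((tendsto_div_shift ha hratio h).inv₀ (pow_ne_zero h hγ)).congr fun n => ?_
  rw [inv_div, Nat.add_sub_cancel]

theorem summable_mul_pow_of_tendsto_ratio {a : ℕ → ℝ} {γ x : ℝ} (ha : ∀ᶠ n in atTop, a n ≠ 0)
    (hratio : Tendsto (fun n => a (n + 1) / a n) atTop (𝓝 γ)) (hx : x ≠ 0) (hγx : |γ * x| < 1) :
    Summable fun n => a n * x ^ n := by
  refine summable_of_ratio_test_tendsto_lt_one hγx
    (ha.mono fun n hn => mul_ne_zero hn (pow_ne_zero n hx)) ?_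
  refine (hratio.mul_const x).abs.congr fun n => ?_
  rw [← norm_div, Real.norm_eq_abs, pow_succ]
  field_simp

theorem tendsto_succ_mul_div_mul {a : ℕ → ℝ} {γ : ℝ}
    (hratio : Tendsto (fun n => a (n + 1) / a n) atTop (𝓝 γ)) :
    Tendsto (fun n : ℕ => ((n + 1 : ℕ) * a (n + 1)) / (n * a n)) atTop (𝓝 γ) := by
  have h := (tendsto_natCast_div_add_atTop (1 : ℝ)).inv₀ one_ne_zero
  rw [inv_one] at h
  simpa only [inv_div, one_mul, div_mul_div_comm, Nat.cast_succ] using h.mul hratio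

theorem exists_tendsto_of_approx {p : ℕ → ℝ} {q : ℕ → ℕ → ℝ} {ε : ℕ → ℝ}
    (hε : Tendsto ε atTop (𝓝 0)) (hq : ∀ m, ∃ l, Tendsto (q m) atTop (𝓝 l))
    (hpq : ∀ m, ∀ᶠ n in atTop, |p n - q m n| ≤ ε m) : ∃ l, Tendsto p atTop (𝓝 l) := by
  refine cauchySeq_tendsto_of_complete (Metric.cauchySeq_iff'.2 fun δ hδ => ?_)
  obtain ⟨m, hm⟩ := (hε.eventually_lt_const (by positivity : 0 < δ / 6)).exists
  obtain ⟨l, hl⟩ := hq m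
  have hclose : ∀ᶠ n in atTop, |p n - l| < δ / 2 := by
    filter_upwards [hpq m, Metric.tendsto_nhds.1 hl (δ / 3) (by positivity)] with n hn hnl
    rw [Real.dist_eq] at hnl
    linarith [abs_sub_le (p n) (q m n) l]
  obtain ⟨N, hN⟩ := eventually_atTop.1 hclose
  refine ⟨N, fun n hn => ?_⟩
  rw [Real.dist_eq]
  linarith [abs_sub_le (p n) l (p N), hN n hn, hN N le_rfl, abs_sub_comm l (p N)]

end Sequences

section Contraction

-- The hypothesis `hy` says that `limsup |y| ≤ q * limsup |y|`.
theorem tendsto_zero_of_contraction {y : ℕ → ℝ} {q B : ℝ} (hq0 : 0 ≤ q) (hq : q < 1)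
    (hB : ∀ n, |y n| ≤ B)
    (hy : ∀ δ, (∀ᶠ n in atTop, |y n| ≤ δ) → ∀ ε > 0, ∀ᶠ n in atTop, |y n| ≤ q * δ + ε) :
    Tendsto y atTop (𝓝 0) := by
  have hpow : ∀ k : ℕ, ∀ ε > 0, ∀ᶠ n in atTop, |y n| ≤ q ^ k * B + ε := by
    intro k
    induction k with
    | zero => exact fun ε hε => Eventually.of_forall fun n => by linarith [hB n]
    | succ k ih =>
      intro ε hε
      refine (hy _ (ih (ε / 2) (by positivity)) (ε / 2) (by positivity)).mono fun n hn => ?_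
      rw [pow_succ']
      nlinarith
  refine Metric.tendsto_nhds.2 fun ε hε => ?_
  have hlim : Tendsto (fun k => q ^ k * B) atTop (𝓝 0) := by
    simpa using (tendsto_pow_atTop_nhds_zero_of_lt_one hq0 hq).mul_const B
  obtain ⟨k, hk⟩ := (hlim.eventually_lt_const (by positivity : 0 < ε / 2)).exists
  refine (hpow k (ε / 3) (by positivity)).mono fun n hn => ?_
  rw [dist_zero_right, Real.norm_eq_abs]
  linarith

theorem tendsto_inv_of_renewal {w x : ℕ → ℝ} {W B : ℝ} (hw : ∀ h, 0 ≤ w h) (hw0 : w 0 = 1)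
    (hW : HasSum w W) (hW2 : W < 2) (hB : ∀ n, |x n| ≤ B)
    (hx : ∀ ε > 0, ∀ᶠ m in atTop, ∀ᶠ n in atTop,
      |∑ h ∈ Finset.range (m + 1), w h * x (n - h) - 1| ≤ ε) :
    Tendsto x atTop (𝓝 W⁻¹) := by
  have hW1 : 1 ≤ W := hw0 ▸ le_hasSum hW 0 fun h _ => hw h
  have hpartial : Tendsto (fun m => ∑ h ∈ Finset.range (m + 1), w h) atTop (𝓝 W) :=
    hW.tendsto_sum_nat.comp (tendsto_add_atTop_nat 1)
  have hle : ∀ m, ∑ h ∈ Finset.range m, w (h + 1) ≤ W - 1 := fun m => by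
    have := sum_le_hasSum (Finset.range (m + 1)) (fun h _ => hw h) hW
    rw [Finset.sum_range_succ', hw0] at this
    linarith
  rw [← tendsto_sub_nhds_zero_iff]
  refine tendsto_zero_of_contraction (q := W - 1) (B := B + |W⁻¹|) (by linarith) (by linarith)
    (fun n => (abs_sub _ _).trans (by gcongr; exact hB n)) fun δ hδ ε hε => ?_
  obtain ⟨m, hm, hmW⟩ := ((hx (ε / 2) (by positivity)).and
    (Metric.tendsto_nhds.1 hpartial (ε / 2) (by positivity))).exists
  obtain ⟨N, hN⟩ := eventually_atTop.1 hδ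
  have hδ0 : 0 ≤ δ := (abs_nonneg _).trans (hN N le_rfl)
  filter_upwards [hm, eventually_ge_atTop (N + m)] with n hn hnN
  have hsplit : x n - W⁻¹ = (∑ h ∈ Finset.range (m + 1), w h * x (n - h) - 1) +
      W⁻¹ * (W - ∑ h ∈ Finset.range (m + 1), w h) -
      ∑ h ∈ Finset.range m, w (h + 1) * (x (n - (h + 1)) - W⁻¹) := by
    simp only [Finset.sum_range_succ', hw0, tsub_zero, mul_sub, Finset.sum_sub_distrib,
      ← Finset.sum_mul, inv_mul_cancel₀ (by linarith : W ≠ 0)]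
    ring
  have htail : |W⁻¹ * (W - ∑ h ∈ Finset.range (m + 1), w h)| ≤ ε / 2 := by
    rw [abs_mul, abs_sub_comm, ← Real.dist_eq]
    exact (mul_le_of_le_one_left dist_nonneg
      ((abs_of_nonneg (by positivity)).trans_le (inv_le_one_of_one_le₀ hW1))).trans hmW.le
  have hsum : |∑ h ∈ Finset.range m, w (h + 1) * (x (n - (h + 1)) - W⁻¹)| ≤ (W - 1) * δ := by
    calc |∑ h ∈ Finset.range m, w (h + 1) * (x (n - (h + 1)) - W⁻¹)|
        ≤ ∑ h ∈ Finset.range m, w (h + 1) * δ := by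
          refine (Finset.abs_sum_le_sum_abs _ _).trans (Finset.sum_le_sum fun h hh => ?_)
          rw [abs_mul, abs_of_nonneg (hw _)]
          have := Finset.mem_range.1 hh
          exact mul_le_mul_of_nonneg_left (hN _ (by lia)) (hw _)
      _ ≤ (W - 1) * δ := by
          rw [← Finset.sum_mul]
          exact mul_le_mul_of_nonneg_right (hle m) hδ0
  rw [hsplit]
  linarith [abs_sub (∑ h ∈ Finset.range (m + 1), w h * x (n - h) - 1 +
      W⁻¹ * (W - ∑ h ∈ Finset.range (m + 1), w h))
      (∑ h ∈ Finset.range m, w (h + 1) * (x (n - (h + 1)) - W⁻¹)),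
    abs_add_le (∑ h ∈ Finset.range (m + 1), w h * x (n - h) - 1)
      (W⁻¹ * (W - ∑ h ∈ Finset.range (m + 1), w h))]

end Contraction

section PowerSeries

open Finset.HasAntidiagonal (antidiagonal)

-- With `t = ∑' n, n * u n`, summing the hypothesis gives `t ^ 2 ≤ 2 * t - 2 * ∑' n, u n`.
theorem tsum_le_half_of_conv_le {u : ℕ → ℝ} (hsum : Summable u)
    (hsum' : Summable fun n : ℕ => n * u n)
    (hconv : ∀ n : ℕ, ∑ p ∈ antidiagonal n, (p.1 * u p.1) * (p.2 * u p.2) ≤ 2 * (n - 1) * u n) :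
    ∑' n, u n ≤ 1 / 2 := by
  set t := ∑' n : ℕ, n * u n
  have hnorm : Summable fun n : ℕ => ‖(n : ℝ) * u n‖ := hsum'.norm
  have hsq : t * t ≤ 2 * t - 2 * ∑' n, u n := by
    calc t * t = ∑' n : ℕ, ∑ p ∈ antidiagonal n, (p.1 * u p.1) * (p.2 * u p.2) :=
          tsum_mul_tsum_eq_tsum_sum_antidiagonal_of_summable_norm hnorm hnorm
      _ ≤ ∑' n : ℕ, (2 * (n * u n) - 2 * u n) := by
          refine Summable.tsum_le_tsum (fun n => (hconv n).trans_eq (by ring)) ?_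
            ((hsum'.mul_left 2).sub (hsum.mul_left 2))
          exact (summable_norm_sum_mul_antidiagonal_of_summable_norm hnorm hnorm).of_norm
      _ = 2 * t - 2 * ∑' n, u n := by
          rw [(hsum'.mul_left 2).tsum_sub (hsum.mul_left 2), tsum_mul_left, tsum_mul_left]
  nlinarith [sq_nonneg (t - 1)]

theorem le_mul_exp_of_deriv_le {f g f' g' : ℝ → ℝ} {x : ℝ} (hx : 0 ≤ x)
    (hf : ∀ y, HasDerivAt f (f' y) y) (hg : ∀ y, HasDerivAt g (g' y) y)
    (hfg : ∀ y > 0, f' y ≤ g' y * f y) : f x ≤ f 0 * Real.exp (g x - g 0) := by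
  have hderiv : ∀ y, HasDerivAt (fun y => f y * Real.exp (-g y))
      ((f' y - g' y * f y) * Real.exp (-g y)) y := fun y =>
    ((hf y).mul (hg y).fun_neg.exp).congr_deriv (by ring)
  have hanti : AntitoneOn (fun y => f y * Real.exp (-g y)) (Set.Ici 0) := by
    refine antitoneOn_of_hasDerivWithinAt_nonpos (convex_Ici 0)
      (fun y _ => (hderiv y).continuousAt.continuousWithinAt)
      (fun y _ => (hderiv y).hasDerivWithinAt) fun y hy => ?_
    rw [interior_Ici] at hy
    exact mul_nonpos_of_nonpos_of_nonneg (sub_nonpos.2 (hfg y hy)) (Real.exp_nonneg _)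
  have h := hanti Set.self_mem_Ici hx hx
  simp only at h
  calc f x = f x * Real.exp (-g x) * Real.exp (g x) := by
        rw [mul_assoc, ← Real.exp_add, neg_add_cancel, Real.exp_zero, mul_one]
    _ ≤ f 0 * Real.exp (-g 0) * Real.exp (g x) := by gcongr
    _ = f 0 * Real.exp (g x - g 0) := by rw [mul_assoc, ← Real.exp_add]; ring_nf

theorem sum_range_sum_antidiagonal_le {b c : ℕ → ℝ} (hb : ∀ n, 0 ≤ b n) (hc : ∀ n, 0 ≤ c n)
    (N : ℕ) : ∑ n ∈ Finset.range N, ∑ p ∈ antidiagonal n, b p.1 * c p.2 ≤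
      (∑ i ∈ Finset.range N, b i) * ∑ j ∈ Finset.range N, c j := by
  simp only [Finset.Nat.sum_antidiagonal_eq_sum_range_succ_mk]
  rw [Finset.sum_range_diag_flip N fun i j => b i * c j, Finset.sum_mul_sum]
  refine Finset.sum_le_sum fun i _ => Finset.sum_le_sum_of_subset_of_nonneg ?_ fun j _ _ =>
    mul_nonneg (hb i) (hc j)
  exact Finset.range_subset_range.2 (Nat.sub_le N i)

-- The polynomials `∑ n < N, a n * y ^ n` and `∑ n < N, k n * y ^ n` satisfy `f' ≤ g' * f`.
theorem sum_mul_pow_le_exp {a k : ℕ → ℝ} (ha : ∀ n, 0 ≤ a n) (hk : ∀ n, 0 ≤ k n) (ha0 : a 0 = 1)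
    (hk0 : k 0 = 0)
    (hconv : ∀ n : ℕ, n * a n = ∑ p ∈ antidiagonal n, p.1 * (k p.1 * a p.2)) {x : ℝ} (hx : 0 ≤ x)
    (N : ℕ) : ∑ n ∈ Finset.range (N + 1), a n * x ^ n ≤
      Real.exp (∑ n ∈ Finset.range (N + 1), k n * x ^ n) := by
  have hderiv : ∀ (b : ℕ → ℝ) (y : ℝ), HasDerivAt (fun y => ∑ n ∈ Finset.range (N + 1), b n * y ^ n)
      (∑ n ∈ Finset.range (N + 1), b n * (n * y ^ (n - 1))) y := fun b y =>
    HasDerivAt.fun_sum fun n _ => (hasDerivAt_pow n y).const_mul (b n)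
  have hEuler : ∀ (b : ℕ → ℝ) (y : ℝ), ∑ n ∈ Finset.range (N + 1), n * b n * y ^ n =
      y * ∑ n ∈ Finset.range (N + 1), b n * (n * y ^ (n - 1)) := fun b y => by
    rw [Finset.mul_sum]
    refine Finset.sum_congr rfl fun n _ => ?_
    cases n with
    | zero => simp
    | succ n => rw [Nat.add_sub_cancel]; ring
  have hzero : ∀ b : ℕ → ℝ, ∑ n ∈ Finset.range (N + 1), b n * 0 ^ n = b 0 := fun b => by
    simp [Finset.sum_range_succ']
  have hle : ∀ y > 0, ∑ n ∈ Finset.range (N + 1), a n * (n * y ^ (n - 1)) ≤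
      (∑ n ∈ Finset.range (N + 1), k n * (n * y ^ (n - 1))) *
        ∑ n ∈ Finset.range (N + 1), a n * y ^ n := fun y hy => by
    refine le_of_mul_le_mul_left ?_ hy
    calc y * ∑ n ∈ Finset.range (N + 1), a n * (n * y ^ (n - 1))
        = ∑ n ∈ Finset.range (N + 1), ∑ p ∈ antidiagonal n,
            p.1 * k p.1 * y ^ p.1 * (a p.2 * y ^ p.2) := by
          rw [← hEuler]
          refine Finset.sum_congr rfl fun n _ => ?_
          rw [hconv, Finset.sum_mul]
          refine Finset.sum_congr rfl fun p hp => ?_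
          rw [← Finset.HasAntidiagonal.mem_antidiagonal.1 hp, pow_add]
          ring
      _ ≤ (∑ i ∈ Finset.range (N + 1), i * k i * y ^ i) *
            ∑ j ∈ Finset.range (N + 1), a j * y ^ j :=
          sum_range_sum_antidiagonal_le
            (fun n => mul_nonneg (mul_nonneg n.cast_nonneg (hk n)) (by positivity))
            (fun n => mul_nonneg (ha n) (by positivity)) _
      _ = y * _ := by rw [hEuler, mul_assoc]
  have h := le_mul_exp_of_deriv_le hx (hderiv a) (hderiv k) hle
  rwa [hzero, hzero, ha0, hk0, one_mul, sub_zero] at h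

section

variable {a k : ℕ → ℝ} {γ : ℝ} (ha : ∀ n, 0 < a n)
  (hratio : Tendsto (fun n => a (n + 1) / a n) atTop (𝓝 γ))
  (hk : ∀ n, 0 ≤ k n) (hka : ∀ n, k n ≤ a n)
  (hbridge : ∀ n : ℕ, ∑ p ∈ antidiagonal n, (p.1 * k p.1) * (p.2 * k p.2) ≤ 2 * (n - 1) * k n)

include ha hratio hk hka hbridge

theorem sum_mul_pow_le_half {x : ℝ} (hx : 0 < x) (hγx : |γ * x| < 1) (N : ℕ) :
    ∑ n ∈ Finset.range N, k n * x ^ n ≤ 1 / 2 := by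
  have hxn : ∀ n, 0 ≤ x ^ n := fun n => (pow_pos hx n).le
  have hsum : Summable fun n => k n * x ^ n :=
    (summable_mul_pow_of_tendsto_ratio (.of_forall fun n => (ha n).ne') hratio hx.ne'
      hγx).of_nonneg_of_le (fun n => mul_nonneg (hk n) (hxn n)) fun n =>
        mul_le_mul_of_nonneg_right (hka n) (hxn n)
  have hsum' : Summable fun n : ℕ => n * (k n * x ^ n) := by
    refine (summable_mul_pow_of_tendsto_ratio
      ((eventually_ne_atTop 0).mono fun n hn => mul_ne_zero (Nat.cast_ne_zero.2 hn) (ha n).ne')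
      (tendsto_succ_mul_div_mul hratio) hx.ne' hγx).of_nonneg_of_le
        (fun n => mul_nonneg n.cast_nonneg (mul_nonneg (hk n) (hxn n))) fun n => ?_
    rw [mul_assoc]
    exact mul_le_mul_of_nonneg_left (mul_le_mul_of_nonneg_right (hka n) (hxn n)) n.cast_nonneg
  refine (hsum.sum_le_tsum _ fun n _ => mul_nonneg (hk n) (hxn n)).trans
    (tsum_le_half_of_conv_le hsum hsum' fun n => ?_)
  calc ∑ p ∈ antidiagonal n, (p.1 * (k p.1 * x ^ p.1)) * (p.2 * (k p.2 * x ^ p.2))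
      = (∑ p ∈ antidiagonal n, (p.1 * k p.1) * (p.2 * k p.2)) * x ^ n := by
        rw [Finset.sum_mul]
        refine Finset.sum_congr rfl fun p hp => ?_
        rw [← Finset.HasAntidiagonal.mem_antidiagonal.1 hp, pow_add]
        ring
    _ ≤ 2 * (n - 1) * k n * x ^ n := mul_le_mul_of_nonneg_right (hbridge n) (hxn n)
    _ = 2 * (n - 1) * (k n * x ^ n) := mul_assoc _ _ _

theorem sum_mul_inv_pow_le_exp_half (hγ : 0 < γ) (ha0 : a 0 = 1) (hk0 : k 0 = 0)
    (hconv : ∀ n : ℕ, n * a n = ∑ p ∈ antidiagonal n, p.1 * (k p.1 * a p.2)) (N : ℕ) :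
    ∑ n ∈ Finset.range (N + 1), a n * γ⁻¹ ^ n ≤ Real.exp (1 / 2) := by
  have hlim : Tendsto (fun x => ∑ n ∈ Finset.range (N + 1), a n * x ^ n) (𝓝[<] γ⁻¹)
      (𝓝 (∑ n ∈ Finset.range (N + 1), a n * γ⁻¹ ^ n)) :=
    (Continuous.tendsto (by fun_prop) _).mono_left nhdsWithin_le_nhds
  refine le_of_tendsto hlim ?_
  filter_upwards [Ioo_mem_nhdsLT (inv_pos.2 hγ)] with x ⟨hx0, hx⟩
  have hγx : |γ * x| < 1 := by
    rw [abs_of_pos (mul_pos hγ hx0), ← lt_inv_mul_iff₀ hγ, mul_one]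
    exact hx
  exact (sum_mul_pow_le_exp (fun n => (ha n).le) hk ha0 hk0 hconv hx0.le N).trans
    (Real.exp_le_exp.2 (sum_mul_pow_le_half ha hratio hk hka hbridge hx0 hγx _))

end

end PowerSeries

/-! ### Smooth addable classes -/

section SmoothAddable

open scoped Nat

/-- A smooth addable class of graphs which contains the one-vertex graph. The constant `γ` is the
limit of the ratios of consecutive coefficients of the exponential generating function, whose radius
of convergence is therefore `γ⁻¹`. -/
structure SmoothAddable (C : GraphClassOn) (γ : ℝ) : Prop where
  isoInvariant : ClassIsoInvariant C
  addable : ClassAddable C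
  singleton_mem : C (Fin 1) ⊥
  tendsto_ratio : Tendsto (fun n => egfCoeff C (n + 1) / egfCoeff C n) atTop (𝓝 γ)

variable {C : GraphClassOn} {γ : ℝ}

theorem ClassSmooth.exists_smoothAddable (hC : ClassSmooth C) (hIso : ClassIsoInvariant C)
    (hAdd : ClassAddable C) (hpt : C (Fin 1) ⊥) : ∃ γ, SmoothAddable C γ := by
  obtain ⟨γ, hγ⟩ := hC
  refine ⟨γ, hIso, hAdd, hpt, (hγ.comp (tendsto_add_atTop_nat 1)).congr fun n => ?_⟩
  simp only [Function.comp_apply, Nat.add_sub_cancel, egfCoeff, Nat.factorial_succ]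
  push_cast
  field_simp

theorem ClassAddable.two_le_two_pow_mul_egfCoeff_connectedIn (hC : ClassAddable C)
    (hIso : ClassIsoInvariant C) (hpt : C (Fin 1) ⊥) {n : ℕ} (hn : n ≠ 0) :
    2 ≤ 2 ^ n * egfCoeff (ConnectedIn C) n := by
  rw [← Nat.one_le_iff_ne_zero] at hn
  induction n, hn using Nat.le_induction with
  | base => rw [egfCoeff_connectedIn_one hpt, pow_one, mul_one]
  | succ n hn ih =>
    have h := hC.egfCoeff_connectedIn_le_two_mul_succ hIso hpt (Nat.one_le_iff_ne_zero.1 hn)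
    calc (2 : ℝ) ≤ 2 ^ n * egfCoeff (ConnectedIn C) n := ih
      _ ≤ 2 ^ n * (2 * egfCoeff (ConnectedIn C) (n + 1)) := by gcongr
      _ = 2 ^ (n + 1) * egfCoeff (ConnectedIn C) (n + 1) := by ring

theorem classInter_true (C : GraphClassOn) : ClassInter C (fun _ _ _ => True) = C := by
  funext V _ G
  exact and_true _

theorem tendsto_two_div_add_one : Tendsto (fun m : ℕ => (2 : ℝ) / (m + 1)) atTop (𝓝 0) := by
  simpa [div_eq_mul_inv] using (tendsto_one_div_add_atTop_nhds_zero_nat (𝕜 := ℝ)).const_mul 2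

namespace SmoothAddable

theorem egfCoeff_pos (hC : SmoothAddable C γ) (n : ℕ) : 0 < egfCoeff C n := by
  rcases eq_or_ne n 0 with rfl | hn
  · rw [hC.addable.1.egfCoeff_zero]
    exact one_pos
  · have h := hC.addable.two_le_two_pow_mul_egfCoeff_connectedIn hC.isoInvariant hC.singleton_mem hn
    exact (pos_of_mul_pos_right (two_pos.trans_le h) (by positivity)).trans_le
      (egfCoeff_inter_le C _ n)

theorem growth_pos (hC : SmoothAddable C γ) : 0 < γ := by
  have hγ : 0 ≤ γ := ge_of_tendsto' hC.tendsto_ratio fun n =>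
    div_nonneg (hC.egfCoeff_pos _).le (hC.egfCoeff_pos _).le
  refine hγ.lt_of_ne' fun h => ?_
  have hsum : Summable fun n => egfCoeff C n * 2 ^ n :=
    summable_mul_pow_of_tendsto_ratio (.of_forall fun n => (hC.egfCoeff_pos n).ne')
      hC.tendsto_ratio two_ne_zero (by simp [h])
  obtain ⟨n, hn, hn0⟩ := ((hsum.tendsto_atTop_zero.eventually_lt_const two_pos).and
    (eventually_ne_atTop 0)).exists
  refine hn.not_ge ?_
  calc (2 : ℝ) ≤ 2 ^ n * egfCoeff (ConnectedIn C) n :=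
        hC.addable.two_le_two_pow_mul_egfCoeff_connectedIn hC.isoInvariant hC.singleton_mem hn0
    _ ≤ 2 ^ n * egfCoeff C n := by
        gcongr
        exact egfCoeff_inter_le C _ n
    _ = egfCoeff C n * 2 ^ n := mul_comm _ _

theorem egfCoeff_mul_inv_pow_nonneg (hC : SmoothAddable C γ) (n : ℕ) :
    0 ≤ egfCoeff C n * γ⁻¹ ^ n :=
  mul_nonneg (hC.egfCoeff_pos n).le (pow_nonneg (inv_nonneg.2 hC.growth_pos.le) n)

theorem exists_hasSum_egfCoeff (hC : SmoothAddable C γ) :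
    ∃ W ≤ Real.exp (1 / 2), HasSum (fun n => egfCoeff C n * γ⁻¹ ^ n) W := by
  have hnonneg := hC.egfCoeff_mul_inv_pow_nonneg
  have hle : ∀ N, ∑ n ∈ Finset.range N, egfCoeff C n * γ⁻¹ ^ n ≤ Real.exp (1 / 2) := fun N => by
    refine (Finset.sum_le_sum_of_subset_of_nonneg (Finset.range_subset_range.2 N.le_succ)
      fun n _ _ => hnonneg n).trans ?_
    refine sum_mul_inv_pow_le_exp_half hC.egfCoeff_pos hC.tendsto_ratio
      (egfCoeff_nonneg (ConnectedIn C)) (egfCoeff_inter_le C _) (fun n => ?_) hC.growth_pos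
      hC.addable.1.egfCoeff_zero (egfCoeff_connectedIn_zero C) (fun n => ?_) N
    · rcases eq_or_ne n 0 with rfl | hn
      · simp [egfCoeff_connectedIn_zero]
      · exact hC.addable.sum_mul_mul_egfCoeff_connectedIn_le hC.isoInvariant hn
    · simp only [natCast_mul_egfCoeff hC.isoInvariant, hC.addable.1.splitCoeff_eq hC.isoInvariant]
  exact ⟨_, Real.tsum_le_of_sum_range_le hnonneg hle, (summable_of_sum_range_le hnonneg hle).hasSum⟩

theorem tendsto_egfCoeff_sub_div (hC : SmoothAddable C γ) (h : ℕ) :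
    Tendsto (fun n => egfCoeff C (n - h) / egfCoeff C n) atTop (𝓝 (γ⁻¹ ^ h)) :=
  tendsto_sub_div (fun n => (hC.egfCoeff_pos n).ne') hC.growth_pos.ne' hC.tendsto_ratio h

theorem abs_classProb_sub_sum_le (hC : SmoothAddable C γ) {D : GraphClassOn}
    (hD : ClassIsoInvariant D) {n m : ℕ} (hm : 2 * m < n) :
    |egfCoeff (ClassInter C D) n / egfCoeff C n - ∑ h ∈ Finset.range (m + 1),
      splitCoeff (ClassInter C D) (n - h) h / egfCoeff C n| ≤ 2 / (m + 1) := by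
  rw [← Finset.sum_div, ← sub_div, abs_div, abs_of_pos (hC.egfCoeff_pos n),
    div_le_iff₀ (hC.egfCoeff_pos n)]
  exact hC.addable.abs_egfCoeff_sub_sum_splitCoeff_le (hC.isoInvariant.inter hD) hm

theorem connectedIn_div_mem_Icc (hC : SmoothAddable C γ) (n : ℕ) :
    egfCoeff (ConnectedIn C) n / egfCoeff C n ∈ Set.Icc 0 1 :=
  ⟨div_nonneg (egfCoeff_nonneg _ _) (hC.egfCoeff_pos n).le,
    div_le_one_of_le₀ (egfCoeff_inter_le C _ n) (hC.egfCoeff_pos n).le⟩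

theorem tendsto_sub_splitCoeff_div (hC : SmoothAddable C γ) (h : ℕ) :
    Tendsto (fun n => egfCoeff C h * γ⁻¹ ^ h * (egfCoeff (ConnectedIn C) (n - h) /
      egfCoeff C (n - h)) - splitCoeff C (n - h) h / egfCoeff C n) atTop (𝓝 0) := by
  have hdiff := ((hC.tendsto_egfCoeff_sub_div h).const_sub (γ⁻¹ ^ h)).const_mul (egfCoeff C h)
  rw [sub_self, mul_zero] at hdiff
  refine (bdd_le_mul_tendsto_zero (.of_forall fun n => (hC.connectedIn_div_mem_Icc (n - h)).1)
    (.of_forall fun n => (hC.connectedIn_div_mem_Icc (n - h)).2) hdiff).congr fun n => ?_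
  have hn := (hC.egfCoeff_pos (n - h)).ne'
  rw [hC.addable.1.splitCoeff_eq hC.isoInvariant]
  field_simp

theorem eventually_abs_renewal_le (hC : SmoothAddable C γ) {ε : ℝ} (hε : 0 < ε) :
    ∀ᶠ m in atTop, ∀ᶠ n in atTop, |∑ h ∈ Finset.range (m + 1), egfCoeff C h * γ⁻¹ ^ h *
      (egfCoeff (ConnectedIn C) (n - h) / egfCoeff C (n - h)) - 1| ≤ ε := by
  filter_upwards [tendsto_two_div_add_one.eventually_lt_const (half_pos hε)] with m hm
  have hdiff := tendsto_finsetSum (Finset.range (m + 1)) fun h _ => hC.tendsto_sub_splitCoeff_div h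
  simp only [Finset.sum_const_zero, Finset.sum_sub_distrib] at hdiff
  filter_upwards [Metric.tendsto_nhds.1 hdiff _ (half_pos hε), eventually_gt_atTop (2 * m)]
    with n hn hnm
  have htrunc := hC.abs_classProb_sub_sum_le (D := fun _ _ _ => True)
    (fun _ _ _ _ _ _ _ => Iff.rfl) hnm
  rw [classInter_true, div_self (hC.egfCoeff_pos n).ne', abs_sub_comm] at htrunc
  rw [dist_zero_right, Real.norm_eq_abs] at hn
  linarith [abs_sub_le (∑ h ∈ Finset.range (m + 1), egfCoeff C h * γ⁻¹ ^ h *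
      (egfCoeff (ConnectedIn C) (n - h) / egfCoeff C (n - h)))
    (∑ h ∈ Finset.range (m + 1), splitCoeff C (n - h) h / egfCoeff C n) 1]

theorem exists_tendsto_connectedIn_div (hC : SmoothAddable C γ) :
    ∃ L, Real.exp (-(1 / 2)) ≤ L ∧
      Tendsto (fun n => egfCoeff (ConnectedIn C) n / egfCoeff C n) atTop (𝓝 L) := by
  obtain ⟨W, hW, hsum⟩ := hC.exists_hasSum_egfCoeff
  have hweight := hC.egfCoeff_mul_inv_pow_nonneg
  have hzero : egfCoeff C 0 * γ⁻¹ ^ 0 = 1 := by rw [hC.addable.1.egfCoeff_zero, pow_zero, mul_one]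
  have hWpos : 0 < W := one_pos.trans_le (hzero ▸ le_hasSum hsum 0 fun h _ => hweight h)
  have hW2 : W < 2 := hW.trans_lt
    ((Real.lt_log_iff_exp_lt two_pos).1 (by linarith [Real.log_two_gt_d9]))
  refine ⟨W⁻¹, ?_, tendsto_inv_of_renewal (B := 1) hweight hzero hsum hW2 (fun n => ?_)
    fun ε hε => hC.eventually_abs_renewal_le hε⟩
  · rw [Real.exp_neg]
    exact inv_anti₀ hWpos hW
  · rw [abs_of_nonneg (hC.connectedIn_div_mem_Icc n).1]
    exact (hC.connectedIn_div_mem_Icc n).2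

end SmoothAddable

end SmoothAddable

/-! ### Limit laws for first-order sentences -/

section LimitLaw

theorem natCard_subtype_le_add {α : Type*} [Finite α] {p q z : α → Prop}
    (h : ∀ x, p x → q x ∨ z x) :
    Nat.card {x // p x} ≤ Nat.card {x // q x} + Nat.card {x // z x} :=
  (Set.ncard_le_ncard (s := {x | p x}) (t := {x | q x} ∪ {x | z x}) h (Set.toFinite _)).trans
    (Set.ncard_union_le _ _)

theorem abs_natCard_sub_natCard_le {α : Type*} [Finite α] {p q z : α → Prop}
    (h : ∀ x, ¬z x → (p x ↔ q x)) :
    |(Nat.card {x // p x} : ℝ) - Nat.card {x // q x}| ≤ Nat.card {x // z x} := by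
  have hpq := natCard_subtype_le_add fun x (hx : p x) =>
    or_iff_not_imp_right.2 fun hz => (h x hz).1 hx
  have hqp := natCard_subtype_le_add fun x (hx : q x) =>
    or_iff_not_imp_right.2 fun hz => (h x hz).2 hx
  rify at hpq hqp
  exact abs_sub_le_iff.2 ⟨by linarith, by linarith⟩

theorem natCard_subtype_prod {α β : Type*} (p : α → Prop) (q : β → Prop) :
    Nat.card {x : α × β // p x.1 ∧ q x.2} = Nat.card {x // p x} * Nat.card {x // q x} := by
  rw [Nat.card_congr Equiv.subtypeProdEquivProd, Nat.card_prod]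

/-- The class of the graphs of `C` whose disjoint union with some connected graph of `C` containing
a pendant copy of `(M, r)` satisfies `φ`. When `φ` is decided by `(M, r)`, the choice of the
connected graph is irrelevant. -/
def SatBesideCopy {A : Type*} (C : GraphClassOn) (M : SimpleGraph A) (r : A)
    (φ : Language.graph.Sentence) : GraphClassOn :=
  ClassInter C fun _ _ H => ∃ (W : Type) (_ : Finite W) (J : SimpleGraph W),
    ConnectedIn C W J ∧ HasPendantCopy M r J ∧ SatFO (J ⊕g H) φ

variable {A : Type} {C : GraphClassOn} {M : SimpleGraph A} {r : A} {φ : Language.graph.Sentence}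
  {γ : ℝ}

theorem Decides.satFO_iff {W₁ W₂ : Type} [Finite W₁] [Finite W₂] {J₁ : SimpleGraph W₁}
    {J₂ : SimpleGraph W₂} (hφ : Decides C M r φ) (h₁ : ConnectedIn C W₁ J₁)
    (h₂ : ConnectedIn C W₂ J₂) (hcopy₁ : HasPendantCopy M r J₁) (hcopy₂ : HasPendantCopy M r J₂) :
    SatFO J₁ φ ↔ SatFO J₂ φ := by
  have hempty : ∀ {W : Type} (J : SimpleGraph W),
      SatFO J φ ↔ SatFO (J ⊕g (⊥ : SimpleGraph Empty)) φ := fun J =>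
    satFO_congr (RelIso.ofSurjective SimpleGraph.Embedding.sumInl
      (Equiv.sumEmpty _ Empty).symm.surjective) φ
  rw [hempty J₁, hempty J₂]
  exact hφ ⊥ h₁.1 h₂.1 h₁.2 h₂.2 hcopy₁ hcopy₂

theorem Decides.satBesideCopy_iff {U W : Type} [Finite U] [Finite W] {J : SimpleGraph W}
    {H : SimpleGraph U} (hφ : Decides C M r φ) (hJ : ConnectedIn C W J)
    (hcopy : HasPendantCopy M r J) :
    SatBesideCopy C M r φ U H ↔ C U H ∧ SatFO (J ⊕g H) φ := by
  refine and_congr_right fun _ => ⟨?_, fun h => ⟨W, inferInstance, J, hJ, hcopy, h⟩⟩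
  rintro ⟨W', _, J', hJ', hcopy', h⟩
  exact (hφ H hJ'.1 hJ.1 hJ'.2 hJ.2 hcopy' hcopy).1 h

theorem Decides.abs_splitCoeff_sub_le (hφ : Decides C M r φ) (hC : ClassDecomposable C)
    (hIso : ClassIsoInvariant C) (i j : ℕ) :
    |splitCoeff (ClassInter C fun _ _ G => SatFO G φ) i j -
      egfCoeff (ConnectedIn C) i * egfCoeff (SatBesideCopy C M r φ) j| ≤
        egfCoeff (Avoiding C M r) i * egfCoeff C j := by
  have hcount : |(splitCount (ClassInter C fun _ _ G => SatFO G φ) i j : ℝ) -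
      (classCount (ConnectedIn C) i * classCount (SatBesideCopy C M r φ) j : ℕ)| ≤
        (classCount (Avoiding C M r) i * classCount C j : ℕ) := by
    simp only [classCount, splitCount, ← natCard_subtype_prod]
    refine abs_natCard_sub_natCard_le fun ⟨J, H⟩ havoid => ?_
    have hcopy : ConnectedIn C _ J → C _ H → HasPendantCopy M r J := fun hJ hH =>
      by_contra fun h => havoid ⟨⟨hJ, h⟩, hH⟩
    constructor
    · rintro ⟨hconn, hJH, hsat⟩
      obtain ⟨hJ, hH⟩ := (hC.sum_iff hIso).1 hJH
      exact ⟨⟨hJ, hconn⟩, (hφ.satBesideCopy_iff ⟨hJ, hconn⟩ (hcopy ⟨hJ, hconn⟩ hH)).2 ⟨hH, hsat⟩⟩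
    · rintro ⟨hJ, hbeside⟩
      obtain ⟨hH, hsat⟩ := (hφ.satBesideCopy_iff hJ (hcopy hJ hbeside.1)).1 hbeside
      exact ⟨hJ.2, (hC.sum_iff hIso).2 ⟨hJ.1, hH⟩, hsat⟩
  simp only [splitCoeff, egfCoeff, div_mul_div_comm, ← sub_div, abs_div]
  rw [abs_of_pos (by positivity : (0 : ℝ) < i.factorial * j.factorial)]
  push_cast at hcount
  gcongr

theorem classProb_eq_div (C D : GraphClassOn) (n : ℕ) :
    classProb C n (D (Fin n)) = egfCoeff (ClassInter C D) n / egfCoeff C n :=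
  (div_div_div_cancel_right₀ (by positivity) _ _).symm

namespace SmoothAddable

theorem classProb_not (hC : SmoothAddable C γ) (n : ℕ) (P : SimpleGraph (Fin n) → Prop) :
    classProb C n (fun G => ¬P G) = 1 - classProb C n P := by
  have h := natCard_and_add_natCard_and_not (C (Fin n)) P
  rify at h
  rw [eq_sub_iff_add_eq', classProb, classProb, ← add_div, h]
  exact div_self (div_ne_zero_iff.1 (hC.egfCoeff_pos n).ne').1

theorem tendsto_shift_div (hC : SmoothAddable C γ) {D : GraphClassOn} {l : ℝ}
    (hD : Tendsto (fun n => egfCoeff D n / egfCoeff C n) atTop (𝓝 l)) (h : ℕ) :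
    Tendsto (fun n => egfCoeff D (n - h) / egfCoeff C n) atTop (𝓝 (l * γ⁻¹ ^ h)) :=
  ((hD.comp (tendsto_sub_atTop_nat h)).mul (hC.tendsto_egfCoeff_sub_div h)).congr fun _ =>
    div_mul_div_cancel₀ (hC.egfCoeff_pos _).ne'

theorem tendsto_avoiding_div [Finite A] (hC : SmoothAddable C γ) (hM : C A M)
    (hMc : M.Connected) (r : A) :
    Tendsto (fun n => egfCoeff (Avoiding C M r) n / egfCoeff C n) atTop (𝓝 0) := by
  set K : ℝ := (Nat.card A).factorial * (Nat.card A ^ 2 + 1)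
  have hlim : Tendsto (fun n : ℕ => K * (egfCoeff C (n + Nat.card A) / egfCoeff C n) * (n : ℝ)⁻¹)
      atTop (𝓝 0) := by
    simpa using ((tendsto_div_shift (fun n => (hC.egfCoeff_pos n).ne') hC.tendsto_ratio
      (Nat.card A)).const_mul K).mul (tendsto_inv_atTop_nhds_zero_nat (𝕜 := ℝ))
  refine squeeze_zero' (.of_forall fun n => div_nonneg (egfCoeff_nonneg _ n)
    (hC.egfCoeff_pos n).le) ?_ hlim
  filter_upwards [eventually_ne_atTop 0] with n hn
  have hle := hC.addable.mul_egfCoeff_avoiding_le hC.isoInvariant hM hMc r n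
  rw [mul_div_assoc', div_mul_eq_mul_div]
  refine div_le_div_of_nonneg_right ?_ (hC.egfCoeff_pos n).le
  rw [← div_eq_mul_inv, le_div_iff₀' (by positivity), Nat.add_comm]
  refine hle.trans (mul_le_mul_of_nonneg_left (egfCoeff_inter_le C _ _) (by positivity))

theorem exists_tendsto_connected (hC : SmoothAddable C γ) : ∃ L, Real.exp (-(1 / 2)) ≤ L ∧
    Tendsto (fun n => classProb C n fun G => G.Connected) atTop (𝓝 L) := by
  simp only [classProb_eq_div C fun _ _ G => G.Connected]
  exact hC.exists_tendsto_connectedIn_div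

theorem exists_tendsto_splitCoeff_div [Finite A] (hC : SmoothAddable C γ) (hM : C A M)
    (hMc : M.Connected) (hφ : Decides C M r φ) (h : ℕ) : ∃ l, Tendsto (fun n =>
      splitCoeff (ClassInter C fun _ _ G => SatFO G φ) (n - h) h / egfCoeff C n) atTop (𝓝 l) := by
  obtain ⟨L, -, hL⟩ := hC.exists_tendsto_connectedIn_div
  have hmain := (hC.tendsto_shift_div hL h).mul_const (egfCoeff (SatBesideCopy C M r φ) h)
  have herror := (hC.tendsto_shift_div (hC.tendsto_avoiding_div hM hMc r) h).mul_const
    (egfCoeff C h)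
  rw [zero_mul, zero_mul] at herror
  refine ⟨_, tendsto_of_tendsto_of_dist hmain (squeeze_zero (fun _ => dist_nonneg)
    (fun n => ?_) herror)⟩
  rw [dist_comm, Real.dist_eq, div_mul_eq_mul_div, ← sub_div, abs_div,
    abs_of_pos (hC.egfCoeff_pos n), div_mul_eq_mul_div]
  exact div_le_div_of_nonneg_right (hφ.abs_splitCoeff_sub_le hC.addable.1 hC.isoInvariant _ _)
    (hC.egfCoeff_pos n).le

theorem exists_tendsto_classProb_satFO (hC : SmoothAddable C γ) (φ : Language.graph.Sentence) :
    ∃ p, Tendsto (fun n => classProb C n fun G => SatFO G φ) atTop (𝓝 p) := by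
  obtain ⟨A, _, M, r, hM, hMc, hφ⟩ :=
    hC.addable.exists_decides hC.isoInvariant hC.singleton_mem φ
  choose l hl using hC.exists_tendsto_splitCoeff_div hM hMc hφ
  refine exists_tendsto_of_approx tendsto_two_div_add_one
    (fun m => ⟨_, tendsto_finsetSum (Finset.range (m + 1)) fun h _ => hl h⟩) fun m => ?_
  filter_upwards [eventually_gt_atTop (2 * m)] with n hn
  rw [classProb_eq_div C fun _ _ G => SatFO G φ]
  exact hC.abs_classProb_sub_sum_le (fun _ _ _ _ _ _ ⟨e⟩ => satFO_congr e φ) hn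

theorem connected_limit_le [Finite A] (hC : SmoothAddable C γ) (hM : C A M) (hMc : M.Connected)
    {D : GraphClassOn} {L p : ℝ}
    (hL : Tendsto (fun n => classProb C n fun G => G.Connected) atTop (𝓝 L))
    (hp : Tendsto (fun n => classProb C n (D (Fin n))) atTop (𝓝 p))
    (hD : ∀ n (G : SimpleGraph (Fin n)), ConnectedIn C (Fin n) G → HasPendantCopy M r G →
      D (Fin n) G) : L ≤ p := by
  have hsum := hp.add (hC.tendsto_avoiding_div hM hMc r)
  rw [add_zero] at hsum
  refine le_of_tendsto_of_tendsto' hL hsum fun n => ?_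
  rw [classProb_eq_div C fun _ _ G => G.Connected, classProb_eq_div, ← add_div]
  refine div_le_div_of_nonneg_right ?_ (hC.egfCoeff_pos n).le
  have hcount : classCount (ConnectedIn C) n ≤
      classCount (ClassInter C D) n + classCount (Avoiding C M r) n :=
    natCard_subtype_le_add fun G hG => or_iff_not_imp_right.2 fun havoid =>
      ⟨hG.1, hD n G hG (not_not.1 fun h => havoid ⟨hG, h⟩)⟩
  unfold egfCoeff
  rw [← add_div]
  gcongr
  exact_mod_cast hcount

theorem satFO_limit_le_or_le (hC : SmoothAddable C γ) {L p : ℝ} {φ : Language.graph.Sentence}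
    (hL : Tendsto (fun n => classProb C n fun G => G.Connected) atTop (𝓝 L))
    (hp : Tendsto (fun n => classProb C n fun G => SatFO G φ) atTop (𝓝 p)) :
    p ≤ 1 - L ∨ L ≤ p := by
  obtain ⟨A, _, M, r, hM, hMc, hφ⟩ :=
    hC.addable.exists_decides hC.isoInvariant hC.singleton_mem φ
  by_cases hsat : ∃ n, ∃ G : SimpleGraph (Fin n),
    ConnectedIn C (Fin n) G ∧ HasPendantCopy M r G ∧ SatFO G φ
  · obtain ⟨n₀, G₀, hG₀, hcopy₀, hsat₀⟩ := hsat
    exact .inr (hC.connected_limit_le hM hMc (D := fun _ _ G => SatFO G φ) hL hp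
      fun n G hG hcopy => (hφ.satFO_iff hG₀ hG hcopy₀ hcopy).1 hsat₀)
  · have hnot : Tendsto (fun n => classProb C n fun G => ¬SatFO G φ) atTop (𝓝 (1 - p)) :=
      (hp.const_sub 1).congr fun n => (hC.classProb_not n _).symm
    have := hC.connected_limit_le hM hMc (D := fun _ _ G => ¬SatFO G φ) hL hnot
      fun n G hG hcopy h => hsat ⟨n, G, hG, hcopy, h⟩
    exact .inl (by linarith)

end SmoothAddable

end LimitLaw

/-- Limiting probabilities of first-order sentences on a smooth addable
class cluster near `0` and `1`: they lie in `[0, c] ∪ [1 - c, 1]` where `c ≤ 1 - e^{-1/2}`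
is the limiting probability of being disconnected. -/
theorem fo_limit_probabilities_cluster
    (C : GraphClassOn) (hIso : ClassIsoInvariant C) (hAdd : ClassAddable C)
    (hSmooth : ClassSmooth C)
    (hne : ∀ n : ℕ, 1 ≤ n → ∃ G : SimpleGraph (Fin n), C (Fin n) G) :
    ∃ c : ℝ,
      Tendsto (fun n : ℕ => classProb C n (fun G => ¬G.Connected)) atTop (𝓝 c) ∧
      c ≤ 1 - Real.exp (-(1 / 2 : ℝ)) ∧
      ∀ φ : Language.graph.Sentence, ∃ p : ℝ,
        Tendsto (fun n : ℕ => classProb C n (fun G => SatFO G φ)) atTop (𝓝 p) ∧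
        (p ≤ c ∨ 1 - c ≤ p) := by
  obtain ⟨G, hG⟩ := hne 1 le_rfl
  obtain ⟨γ, hC⟩ := hSmooth.exists_smoothAddable hIso hAdd (Subsingleton.elim G ⊥ ▸ hG)
  obtain ⟨L, hL, hlim⟩ := hC.exists_tendsto_connected
  refine ⟨1 - L, ?_, by linarith, fun φ => ?_⟩
  · exact (hlim.const_sub 1).congr fun n => (hC.classProb_not n _).symm
  · obtain ⟨p, hp⟩ := hC.exists_tendsto_classProb_satFO φ
    refine ⟨p, hp, ?_⟩
    rw [sub_sub_cancel]
    exact hC.satFO_limit_le_or_le hlim hp
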